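/- arXiv:1606.08818 — 2 statements merged into one kernel-verified Lean document; each statement's English description precedes it below -/
import Mathlib

section
/- Minimum principle for Lagrangian graphs: Let D ⊂ ℝⁿ be a bounded domain, I ⊂ ℝ an open interval, and c ∈ [nπ/2, (n+1)π/2). If u ∈ ℱ_c(I × D), then the function v(x) := inf_{t ∈ I} u(t, x) belongs to F_{c−π/2}(D) (in particular, either v ≡ −∞, which by convention is of type F_{c−π/2}, or v is a finite-valued function of type F_{c−π/2} on D). -/
open Real Filter Matrix

noncomputable section

/-- The Hessian matrix of a function `v : ℝ^m → ℝ` at `x`. -/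
def hessianMatrix {m : ℕ} (v : (Fin m → ℝ) → ℝ) (x : Fin m → ℝ) :
    Matrix (Fin m) (Fin m) ℝ :=
  Matrix.of fun i j => iteratedFDeriv ℝ 2 v x ![Pi.single i 1, Pi.single j 1]

/-- The lifted Lagrangian angle θ̃(A) = ∑ arctan λ_j(A) of a real symmetric matrix. -/
def liftedAngle {m : ℕ} (A : Matrix (Fin m) (Fin m) ℝ) : ℝ :=
  if h : A.IsHermitian then ∑ j, Real.arctan (h.eigenvalues j) else 0

/-- The Harvey–Lawson branches `F_c` of the special Lagrangian subequation. -/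
def Fc (m : ℕ) (c : ℝ) : Set (Matrix (Fin m) (Fin m) ℝ) :=
  {A | A.IsSymm ∧ c ≤ liftedAngle A}

/-- `I_n = diag(0,1,…,1)` as a complex `(n+1)×(n+1)` matrix. -/
def Inmat (n : ℕ) : Matrix (Fin (n+1)) (Fin (n+1)) ℂ :=
  Matrix.diagonal fun i => if i = 0 then 0 else 1

/-- The complex matrix `I_n + i A`. -/
def cmat {n : ℕ} (A : Matrix (Fin (n+1)) (Fin (n+1)) ℝ) :
    Matrix (Fin (n+1)) (Fin (n+1)) ℂ :=
  Inmat n + Complex.I • A.map (fun a => (a : ℂ))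

open Classical in
/-- The lifted space-time Lagrangian angle Θ̃, summing `Complex.arg` (with values in
`(-π, π]`) over the roots (with multiplicity) of the characteristic polynomial of
`I_n + i A`, shifted by `π/2` over the singular set `S = {det (I_n + iA) = 0}` where only
the nonzero roots are counted. -/
def spaceTimeAngle {n : ℕ} (A : Matrix (Fin (n+1)) (Fin (n+1)) ℝ) : ℝ :=
  if (cmat A).det = 0 then
    π / 2 + ((((cmat A).charpoly.roots).filter (fun z => z ≠ 0)).map Complex.arg).sum
  else (((cmat A).charpoly.roots).map Complex.arg).sum

/-- The degenerate special Lagrangian subequation `ℱ_c ⊂ Sym(ℝ^{n+1})`. -/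
def calF (n : ℕ) (c : ℝ) : Set (Matrix (Fin (n+1)) (Fin (n+1)) ℝ) :=
  {A | A.IsSymm ∧ c ≤ spaceTimeAngle A}

/-- Interior of a set of symmetric matrices, relative to the symmetric matrices. -/
def symInterior {m : ℕ} (F : Set (Matrix (Fin m) (Fin m) ℝ)) :
    Set (Matrix (Fin m) (Fin m) ℝ) :=
  {A | A.IsSymm ∧ ∀ᶠ B in nhds A, B.IsSymm → B ∈ F}

/-- The dual subequation `F̃ = (−Int F)ᶜ` (within the symmetric matrices). -/
def dualSub {m : ℕ} (F : Set (Matrix (Fin m) (Fin m) ℝ)) :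
    Set (Matrix (Fin m) (Fin m) ℝ) :=
  {A | A.IsSymm ∧ -A ∉ symInterior F}

/-- An `EReal`-valued (i.e. `[−∞,∞)`-valued) function is subaffine on `U` if, for every
affine function `a` and compact `K ⊆ U`, `u ≤ a` on `∂K` implies `u ≤ a` on `K`. -/
def IsSubaffine {m : ℕ} (U : Set (Fin m → ℝ)) (u : (Fin m → ℝ) → EReal) : Prop :=
  ∀ (a : (Fin m → ℝ) →ᵃ[ℝ] ℝ) (K : Set (Fin m → ℝ)), IsCompact K → K ⊆ U →
    (∀ x ∈ frontier K, u x ≤ (a x : EReal)) → ∀ x ∈ K, u x ≤ (a x : EReal)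

/-- `u` is of type `F` on `U` (i.e. `u ∈ F(U)`): `u` is `[−∞,∞)`-valued, upper
semicontinuous on `U`, and `u + v` is subaffine on `U` for every `C²` function `v`
whose Hessian lies in the dual subequation `F̃` at every point of `U`. -/
def IsTypeF {m : ℕ} (F : Set (Matrix (Fin m) (Fin m) ℝ)) (U : Set (Fin m → ℝ))
    (u : (Fin m → ℝ) → EReal) : Prop :=
  (∀ x ∈ U, u x ≠ ⊤) ∧ UpperSemicontinuousOn u U ∧
    ∀ v : (Fin m → ℝ) → ℝ, ContDiffOn ℝ 2 v U →
      (∀ x ∈ U, hessianMatrix v x ∈ dualSub F) →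
      IsSubaffine U (fun x => u x + ((v x : ℝ) : EReal))

/-- The lower-right `n×n` block `A⁺` of an `(n+1)×(n+1)` matrix. -/
def Aplus {n : ℕ} (A : Matrix (Fin (n+1)) (Fin (n+1)) ℝ) : Matrix (Fin n) (Fin n) ℝ :=
  Matrix.of fun i j => A i.succ j.succ

end

lemma spec_real {n : ℕ} (S : Matrix (Fin n) (Fin n) ℝ) (hS : S.IsHermitian) :
    ∃ U : Matrix (Fin n) (Fin n) ℝ, U * Uᵀ = 1 ∧ Uᵀ * U = 1 ∧
      S = U * diagonal hS.eigenvalues * Uᵀ := by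
  have h := hS.spectral_theorem
  refine ⟨hS.eigenvectorUnitary, ?_, ?_, ?_⟩
  · have := Unitary.coe_mul_star_self hS.eigenvectorUnitary
    simpa [star_eq_conjTranspose] using this
  · have := Unitary.coe_star_mul_self hS.eigenvectorUnitary
    simpa [star_eq_conjTranspose] using this
  · rw [Unitary.conjStarAlgAut_apply] at h
    simpa [star_eq_conjTranspose] using h

lemma liftedAngle_eq {n : ℕ} (S : Matrix (Fin n) (Fin n) ℝ) (hS : S.IsHermitian) :
    liftedAngle S = ∑ j, Real.arctan (hS.eigenvalues j) := by
  unfold liftedAngle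
  rw [dif_pos hS]

lemma lift_zero (H : ℝ → ℝ) (hc : ContinuousOn H (Set.Ici 0))
    (hz : ∀ s, 0 ≤ s → (H s : Real.Angle) = 0) (hlim : Tendsto H atTop (nhds 0)) : H 0 = 0 := by
  have key : ∀ s, 0 ≤ s → ∃ k : ℤ, H s = k * (2 * π) := by
    intro s hs
    obtain ⟨k, hk⟩ := Real.Angle.coe_eq_zero_iff.1 (hz s hs)
    exact ⟨k, by rw [← hk]; simp⟩
  have hnear : ∀ᶠ s in atTop, |H s| < π := by
    have := hlim.abs
    rw [abs_zero] at this
    exact this.eventually_lt_const Real.pi_pos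
  obtain ⟨s, hs1, hs0⟩ := (hnear.and (eventually_ge_atTop (0:ℝ))).exists
  by_contra h0
  have hb : π < |H 0| := by
    obtain ⟨k, hk⟩ := key 0 le_rfl
    have hk0 : k ≠ 0 := by
      rintro rfl; simp at hk; exact h0 hk
    have : (1:ℝ) ≤ |(k:ℝ)| := by exact_mod_cast Int.one_le_abs hk0
    rw [hk, abs_mul, abs_of_pos (by positivity : (0:ℝ) < 2 * π)]
    nlinarith [Real.pi_pos]
  have hcc : ContinuousOn (fun s => |H s|) (Set.Icc 0 s) :=
    (hc.mono Set.Icc_subset_Ici_self).abs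
  obtain ⟨r, hr, hr2⟩ := intermediate_value_Icc' hs0 hcc ⟨hs1.le, hb.le⟩
  obtain ⟨k, hk⟩ := key r hr.1
  simp only at hr2
  rw [hk, abs_mul, abs_of_pos (by positivity : (0:ℝ) < 2 * π)] at hr2
  have h2 : |(k:ℝ)| * 2 = 1 := by
    have := Real.pi_pos.ne'
    field_simp at hr2
    linarith
  have h3 : |k| * 2 = 1 := by exact_mod_cast h2
  omega

lemma angle_prod (R : Multiset ℂ) (h : ∀ z ∈ R, z ≠ 0) :
    (Complex.arg R.prod : Real.Angle) = ((R.map Complex.arg).sum : ℝ) := by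
  induction R using Multiset.induction_on with
  | empty => simp
  | cons a R ih =>
    have h1 : R.prod ≠ 0 := by
      apply Multiset.prod_ne_zero
      intro h0
      exact h 0 (Multiset.mem_cons_of_mem h0) rfl
    rw [Multiset.prod_cons, Multiset.map_cons, Multiset.sum_cons,
      Complex.arg_mul_coe_angle (h a (Multiset.mem_cons_self a R)) h1,
      ih (fun z hz => h z (Multiset.mem_cons_of_mem hz))]
    simp

lemma arg_cont (R : Multiset ℂ) (h : ∀ z ∈ R, ∀ s : ℝ, 0 ≤ s → z + s ∈ Complex.slitPlane) :
    ContinuousOn (fun s : ℝ => (R.map (fun z => Complex.arg (z + s))).sum) (Set.Ici 0) := by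
  induction R using Multiset.induction_on with
  | empty => simp [continuousOn_const]
  | cons a R ih =>
    simp only [Multiset.map_cons, Multiset.sum_cons]
    refine ContinuousOn.add ?_ (ih (fun z hz => h z (Multiset.mem_cons_of_mem hz)))
    intro s hs
    apply ContinuousAt.continuousWithinAt
    have := Complex.continuousAt_arg (h a (Multiset.mem_cons_self a R) s hs)
    exact ContinuousAt.comp (f := fun s : ℝ => a + (s:ℂ)) this (by fun_prop)

lemma arg_tendsto_of_div {g : ℝ → ℂ} (h : Tendsto (fun s : ℝ => g s / s) atTop (nhds 1)) :
    Tendsto (fun s : ℝ => Complex.arg (g s)) atTop (nhds 0) := by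
  have h1 : Tendsto (fun s : ℝ => Complex.arg (g s / s)) atTop (nhds (Complex.arg 1)) :=
    (Complex.continuousAt_arg (by simp)).tendsto.comp h
  rw [Complex.arg_one] at h1
  refine h1.congr' ?_
  filter_upwards [eventually_gt_atTop (0:ℝ)] with s hs
  have : g s = (s:ℂ) * (g s / s) := by
    have : (s:ℂ) ≠ 0 := by exact_mod_cast hs.ne'
    field_simp
  conv_rhs => rw [this]
  rw [Complex.arg_real_mul _ hs]

lemma inv_tendsto : Tendsto (fun s : ℝ => ((s:ℂ))⁻¹) atTop (nhds 0) := by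
  have := (tendsto_inv_atTop_zero (𝕜 := ℝ))
  have h2 := (Complex.continuous_ofReal.tendsto 0).comp this
  simpa [Function.comp_def] using h2

lemma arg_lim (R : Multiset ℂ) :
    Tendsto (fun s : ℝ => (R.map (fun z => Complex.arg (z + s))).sum) atTop (nhds 0) := by
  induction R using Multiset.induction_on with
  | empty => simp
  | cons a R ih =>
    simp only [Multiset.map_cons, Multiset.sum_cons]
    rw [← zero_add (0:ℝ)]
    refine Tendsto.add ?_ ih
    apply arg_tendsto_of_div
    have : Tendsto (fun s : ℝ => a * (s:ℂ)⁻¹ + 1) atTop (nhds (a * 0 + 1)) :=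
      (inv_tendsto.const_mul a).add_const 1
    rw [mul_zero, zero_add] at this
    refine this.congr' ?_
    filter_upwards [eventually_gt_atTop (0:ℝ)] with s hs
    have : (s:ℂ) ≠ 0 := by exact_mod_cast hs.ne'
    field_simp

/-- Matrix of the quadratic form `N (τ - p·ζ)² + S(ζ,ζ)`. -/
noncomputable def Amat {n : ℕ} (N : ℝ) (p : Fin n → ℝ) (S : Matrix (Fin n) (Fin n) ℝ) :
    Matrix (Fin (n+1)) (Fin (n+1)) ℝ :=
  Matrix.of fun i j => Fin.cases (Fin.cases N (fun j => -N * p j) j)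
    (fun i => Fin.cases (-N * p i) (fun j => S i j + N * p i * p j) j) i

noncomputable def sumEq (n : ℕ) : Unit ⊕ Fin n ≃ Fin (n+1) :=
  Equiv.ofBijective (Sum.elim (fun _ => 0) Fin.succ) (by
    constructor
    · rintro (a | a) (b | b) h
      · rfl
      · exact absurd h (Fin.succ_ne_zero b).symm
      · exact absurd h (Fin.succ_ne_zero a)
      · exact congrArg _ (Fin.succ_injective _ h)
    · intro i
      refine Fin.cases ⟨Sum.inl (), rfl⟩ (fun j => ⟨Sum.inr j, rfl⟩) i)

@[simp] lemma sumEq_inl (n : ℕ) (a : Unit) : sumEq n (Sum.inl a) = 0 := rfl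
@[simp] lemma sumEq_inr (n : ℕ) (j : Fin n) : sumEq n (Sum.inr j) = j.succ := rfl

lemma det_schur {n : ℕ} (N : ℝ) (p : Fin n → ℝ) (S U : Matrix (Fin n) (Fin n) ℝ)
    (l : Fin n → ℝ) (hU : U * Uᵀ = 1) (hU' : Uᵀ * U = 1) (hS : S = U * diagonal l * Uᵀ)
    (s : ℝ) (hs : 0 ≤ s) :
    (cmat (Amat N p S) + (s:ℂ) • (1 : Matrix (Fin (n+1)) (Fin (n+1)) ℂ)).det =
      (∏ j, (1 + Complex.I * l j + s)) *
      (s + Complex.I * N + Complex.I * s * N * ∑ j, ((p ᵥ* U) j : ℂ)^2 / (1 + Complex.I * l j + s)) := by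
  classical
  set d : Fin n → ℂ := fun j => 1 + Complex.I * l j + s with hd
  have hd0 : ∀ j, d j ≠ 0 := by
    intro j h
    have := congrArg Complex.re h
    simp [hd] at this
    linarith
  let V : Matrix (Fin n) (Fin n) ℂ := U.map (fun a => (a:ℂ))
  have hmap : ∀ X Y : Matrix (Fin n) (Fin n) ℝ, (X * Y).map (fun a => (a:ℂ)) =
      X.map (fun a => (a:ℂ)) * Y.map (fun a => (a:ℂ)) := fun X Y => by
    ext i j; simp [Matrix.mul_apply]
  have h1map : (1 : Matrix (Fin n) (Fin n) ℝ).map (fun a => (a:ℂ)) = 1 := by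
    ext i j; simp [Matrix.one_apply]; split_ifs <;> simp
  have hV : V * Vᵀ = 1 := by
    rw [← h1map, ← hU, hmap]; rfl
  have hV' : Vᵀ * V = 1 := by
    rw [← h1map, ← hU', hmap]; rfl
  have hSV : S.map (fun a => (a:ℂ)) = V * diagonal (fun j => (l j : ℂ)) * Vᵀ := by
    rw [hS, hmap, hmap]
    congr 2
    ext i j; simp [Matrix.diagonal_apply]; split_ifs <;> simp
  let T : Matrix (Fin n) (Fin n) ℂ := V * diagonal d * Vᵀ
  have hT : T = (1 + (s:ℂ)) • (1 : Matrix (Fin n) (Fin n) ℂ) + Complex.I • S.map (fun a => (a:ℂ)) := by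
    rw [hSV, ← hV]
    have : diagonal d = (1 + (s:ℂ)) • (1 : Matrix (Fin n) (Fin n) ℂ) +
        Complex.I • diagonal (fun j => (l j : ℂ)) := by
      ext i j
      by_cases h : i = j
      · subst h; simp [hd]; ring
      · simp [h]
    simp only [T]
    rw [this, Matrix.mul_add, Matrix.add_mul]
    simp
  letI : Invertible T := ⟨V * diagonal (fun j => (d j)⁻¹) * Vᵀ, by
      calc V * diagonal (fun j => (d j)⁻¹) * Vᵀ * (V * diagonal d * Vᵀ)
          = V * diagonal (fun j => (d j)⁻¹) * (Vᵀ * V) * diagonal d * Vᵀ := by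
            simp only [Matrix.mul_assoc]
        _ = V * (diagonal (fun j => (d j)⁻¹) * diagonal d) * Vᵀ := by
            rw [hV']; simp only [Matrix.mul_assoc, Matrix.mul_one, Matrix.one_mul]
        _ = 1 := by
            rw [diagonal_mul_diagonal]
            simp [hd0, hV], by
      calc (V * diagonal d * Vᵀ) * (V * diagonal (fun j => (d j)⁻¹) * Vᵀ)
          = V * diagonal d * (Vᵀ * V) * diagonal (fun j => (d j)⁻¹) * Vᵀ := by
            simp only [Matrix.mul_assoc]
        _ = V * (diagonal d * diagonal (fun j => (d j)⁻¹)) * Vᵀ := by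
            rw [hV']; simp only [Matrix.mul_assoc, Matrix.mul_one, Matrix.one_mul]
        _ = 1 := by
            rw [diagonal_mul_diagonal]
            simp [hd0, hV]⟩
  have hinv : ⅟T = V * diagonal (fun j => (d j)⁻¹) * Vᵀ := rfl
  have hdetT : T.det = ∏ j, d j := by
    have : V.det * Vᵀ.det = 1 := by rw [← det_mul, hV, det_one]
    simp only [T]
    rw [det_mul, det_mul, det_diagonal]
    linear_combination (∏ i, d i) * this
  let a : Matrix Unit Unit ℂ := Matrix.of fun _ _ => (s:ℂ) + Complex.I * N
  let B : Matrix Unit (Fin n) ℂ := Matrix.of fun _ j => -(Complex.I * N * p j)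
  let C : Matrix (Fin n) Unit ℂ := Matrix.of fun j _ => (s:ℂ) * p j
  let P : Matrix (Fin n) Unit ℂ := Matrix.of fun j _ => (p j : ℂ)
  have hfac : fromBlocks 1 0 P 1 *
      ((cmat (Amat N p S) + (s:ℂ) • (1 : Matrix (Fin (n+1)) (Fin (n+1)) ℂ)).submatrix
        (sumEq n) (sumEq n)) = fromBlocks a B C T := by
    have : (cmat (Amat N p S) + (s:ℂ) • (1 : Matrix (Fin (n+1)) (Fin (n+1)) ℂ)).submatrix
        (sumEq n) (sumEq n) = fromBlocks a B (Matrix.of fun j _ => -(Complex.I * N * p j))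
          (T + Matrix.of fun i j => Complex.I * N * p i * p j) := by
      rw [hT]
      ext (i | i) (j | j)
      · simp [cmat, Inmat, Amat, a]; ring
      · simp [cmat, Inmat, Amat, B, Matrix.diagonal_apply, Matrix.one_apply, (Fin.succ_ne_zero j).symm]
        ring
      · simp [cmat, Inmat, Amat, Matrix.diagonal_apply, Matrix.one_apply]
        ring
      · by_cases h : i = j
        · subst h
          simp [cmat, Inmat, Amat]; ring
        · simp [cmat, Inmat, Amat, h]
          ring
    rw [this, fromBlocks_multiply]
    congr 1
    · simp
    · simp
    · ext i j; simp [P, a, C, Matrix.mul_apply]; ring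
    · ext i j; simp [P, B, Matrix.mul_apply]; ring
  have h1 : (cmat (Amat N p S) + (s:ℂ) • (1 : Matrix (Fin (n+1)) (Fin (n+1)) ℂ)).det =
      (fromBlocks a B C T).det := by
    rw [← hfac, det_mul, det_fromBlocks_zero₁₂, det_submatrix_equiv_self]; simp
  rw [h1, det_fromBlocks₂₂, hdetT, det_unique]
  congr 1
  rw [hinv]
  have h2 : B * (V * diagonal (fun j => (d j)⁻¹) * Vᵀ) * C =
      ((B * V) * diagonal (fun j => (d j)⁻¹)) * (Vᵀ * C) := by
    simp only [Matrix.mul_assoc]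
  have h3 : B * V = Matrix.of fun _ j => -(Complex.I * N * ((p ᵥ* U) j : ℂ)) := by
    ext i j
    simp [B, V, Matrix.mul_apply, Matrix.vecMul, dotProduct, Finset.mul_sum]
    apply Finset.sum_congr rfl; intros; ring
  have h4 : Vᵀ * C = Matrix.of fun j _ => (s:ℂ) * ((p ᵥ* U) j : ℂ) := by
    ext i j
    simp [C, V, Matrix.mul_apply, Matrix.vecMul, dotProduct, Finset.mul_sum]
    apply Finset.sum_congr rfl; intros; ring
  rw [h2, h3, h4, Matrix.sub_apply, Matrix.mul_apply]
  simp only [Matrix.mul_diagonal, Matrix.of_apply, a]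
  rw [sub_eq_add_neg, ← Finset.sum_neg_distrib, Finset.mul_sum]
  congr 1
  apply Finset.sum_congr rfl
  intro j _
  simp only [hd, div_eq_mul_inv]
  ring

lemma arg_one_add_I (l : ℝ) : Complex.arg (1 + Complex.I * l) = Real.arctan l := by
  rw [Complex.arg_of_re_nonneg (by simp)]
  rw [Real.arctan_eq_arcsin]
  congr 1
  have h : ‖(1 + Complex.I * l : ℂ)‖ = √(1 + l ^ 2) := by
    rw [Complex.norm_def, Complex.normSq_apply]
    simp; ring_nf
  rw [h]; simp

lemma prod_roots_add {m : ℕ} (M : Matrix (Fin m) (Fin m) ℂ) (s : ℂ) :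
    (M.charpoly.roots.map (fun z => z + s)).prod = (M + s • (1 : Matrix (Fin m) (Fin m) ℂ)).det := by
  have hsp : M.charpoly = (M.charpoly.roots.map (fun a => Polynomial.X - Polynomial.C a)).prod :=
    (IsAlgClosed.splits M.charpoly).eq_prod_roots_of_monic M.charpoly_monic
  have h1 := Matrix.eval_charpoly M (-s)
  have hcard : M.charpoly.roots.card = m := by
    have := (Polynomial.splits_iff_card_roots.1 (IsAlgClosed.splits M.charpoly))
    rw [this, M.charpoly_natDegree_eq_dim, Fintype.card_fin]
  have h2 : M.charpoly.eval (-s) = (-1)^m * (M.charpoly.roots.map (fun z => z + s)).prod := by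
    conv_lhs => rw [hsp]
    rw [Polynomial.eval_multiset_prod, Multiset.map_map]
    have : (M.charpoly.roots.map (fun z => z + s)).map Neg.neg =
       Multiset.map (Polynomial.eval (-s) ∘ fun a => Polynomial.X - Polynomial.C a) M.charpoly.roots := by
      rw [Multiset.map_map]
      apply Multiset.map_congr rfl
      intro x _
      simp; ring
    rw [← this, Multiset.prod_map_neg, Multiset.card_map, hcard]
  have h3 : (Matrix.scalar (Fin m) (-s) - M).det = (-1)^m * (M + s • (1 : Matrix (Fin m) (Fin m) ℂ)).det := by
    have : Matrix.scalar (Fin m) (-s) - M = -(M + s • (1 : Matrix (Fin m) (Fin m) ℂ)) := by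
      rw [neg_add, ← neg_smul, Matrix.scalar_apply, ← Matrix.smul_one_eq_diagonal]; abel
    rw [this, det_neg, Fintype.card_fin]
  rw [h1, h3] at h2
  exact (mul_left_cancel₀ (pow_ne_zero _ (by norm_num)) h2).symm

lemma spaceTimeAngle_Amat {n : ℕ} (N : ℝ) (hN : 0 < N) (p : Fin n → ℝ)
    (S : Matrix (Fin n) (Fin n) ℝ) (hS : S.IsHermitian) :
    spaceTimeAngle (Amat N p S) = π / 2 + liftedAngle S := by
  obtain ⟨U, hU, hU', hSU⟩ := spec_real S hS
  set l := hS.eigenvalues with hl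
  set q : Fin n → ℝ := p ᵥ* U
  set M := cmat (Amat N p S) with hM
  set R := M.charpoly.roots with hR
  let L : Multiset ℂ := Finset.univ.val.map (fun j => 1 + Complex.I * (l j : ℂ))
  let g : ℝ → ℂ := fun s => s + Complex.I * N + Complex.I * s * N *
    ∑ j, (q j : ℂ)^2 / (1 + Complex.I * l j + s)
  have hdet : ∀ s : ℝ, 0 ≤ s → (R.map (fun z => z + (s:ℂ))).prod =
      (L.map (fun z => z + (s:ℂ))).prod * g s := by
    intro s hs
    rw [hR, prod_roots_add, hM, det_schur N p S U l hU hU' hSU s hs]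
    have hLp : (L.map (fun z => z + (s:ℂ))).prod = ∏ j, (1 + Complex.I * (l j : ℂ) + s) := by
      simp only [L, Multiset.map_map]; rfl
    rw [hLp]
  have hgim : ∀ s : ℝ, 0 ≤ s → 0 < (g s).im := by
    intro s hs
    have h1 : 0 ≤ (∑ j, (q j : ℂ)^2 / (1 + Complex.I * l j + s)).re := by
      rw [Complex.re_sum]
      apply Finset.sum_nonneg
      intro j _
      rw [← Complex.ofReal_pow, Complex.div_re]
      simp only [Complex.ofReal_re, Complex.ofReal_im, zero_mul, zero_div, add_zero]
      apply div_nonneg _ (Complex.normSq_nonneg _)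
      apply mul_nonneg (sq_nonneg _)
      simp; linarith
    have : (g s).im = N + s * N * (∑ j, (q j : ℂ)^2 / (1 + Complex.I * l j + s)).re := by
      simp only [g]
      generalize (∑ j, (q j : ℂ)^2 / (1 + Complex.I * l j + s)) = w
      simp [Complex.mul_im]
    rw [this]
    have := mul_nonneg (mul_nonneg hs hN.le) h1
    linarith
  have hgslit : ∀ s : ℝ, 0 ≤ s → g s ∈ Complex.slitPlane := fun s hs =>
    Complex.mem_slitPlane_iff.2 (Or.inr (hgim s hs).ne')
  have hLre : ∀ z ∈ L, ∀ s : ℝ, 0 ≤ s → z + s ∈ Complex.slitPlane := by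
    intro z hz s hs
    obtain ⟨j, -, rfl⟩ := Multiset.mem_map.1 hz
    apply Complex.mem_slitPlane_iff.2 (Or.inl _)
    simp; linarith
  have hRslit0 : ∀ z ∈ R, ∀ s : ℝ, 0 ≤ s → z + s ≠ 0 := by
    intro z hz s hs h0
    have h1 : (R.map (fun z => z + (s:ℂ))).prod = 0 :=
      Multiset.prod_eq_zero (Multiset.mem_map.2 ⟨z, hz, h0⟩)
    rw [hdet s hs] at h1
    rcases mul_eq_zero.1 h1 with h2 | h2
    · rw [Multiset.prod_eq_zero_iff] at h2
      obtain ⟨w, hw, hw2⟩ := Multiset.mem_map.1 h2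
      exact Complex.slitPlane_ne_zero (hLre w hw s hs) hw2
    · exact Complex.slitPlane_ne_zero (hgslit s hs) h2
  have hRslit : ∀ z ∈ R, ∀ s : ℝ, 0 ≤ s → z + s ∈ Complex.slitPlane := by
    intro z hz s hs
    rw [Complex.mem_slitPlane_iff]
    by_contra hcon
    push Not at hcon
    apply hRslit0 z hz (s + -(z + s).re) (by linarith [hcon.1])
    apply Complex.ext
    · simp
    · simpa using hcon.2
  let H : ℝ → ℝ := fun s => (R.map (fun z => Complex.arg (z + s))).sum -
    ((L.map (fun z => Complex.arg (z + s))).sum + Complex.arg (g s))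
  have hgcont : ContinuousOn (fun s : ℝ => Complex.arg (g s)) (Set.Ici 0) := by
    intro s hs
    apply ContinuousAt.continuousWithinAt
    refine ContinuousAt.comp (f := g) (Complex.continuousAt_arg (hgslit s hs)) ?_
    have hne : ∀ j, (1 + Complex.I * l j + (s:ℂ)) ≠ 0 := fun j =>
      Complex.slitPlane_ne_zero (hLre _ (Multiset.mem_map.2 ⟨j, by simp, rfl⟩) s hs)
    simp only [g]
    refine ContinuousAt.add (by fun_prop) (ContinuousAt.mul (by fun_prop) ?_)
    refine tendsto_finset_sum _ fun j _ => ?_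
    refine ContinuousAt.div (by fun_prop) (by fun_prop) (hne j)
  have hglim : Tendsto (fun s : ℝ => Complex.arg (g s)) atTop (nhds 0) := by
    apply arg_tendsto_of_div
    have hterm : ∀ j, Tendsto (fun s : ℝ => (q j : ℂ)^2 / (1 + Complex.I * l j + s)) atTop (nhds 0) := by
      intro j
      have h1 : Tendsto (fun s : ℝ => ((1 + Complex.I * l j) * (s:ℂ)⁻¹ + 1)) atTop (nhds 1) := by
        have := (inv_tendsto.const_mul (1 + Complex.I * l j)).add_const 1
        simpa using this
      have h2 := ((inv_tendsto.const_mul ((q j : ℂ)^2)).div h1 one_ne_zero)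
      simp only [mul_zero, zero_div] at h2
      refine h2.congr' ?_
      filter_upwards [eventually_gt_atTop (0:ℝ)] with s hs
      have : (s:ℂ) ≠ 0 := by exact_mod_cast hs.ne'
      have hne : (1 + Complex.I * l j + (s:ℂ)) ≠ 0 :=
        Complex.slitPlane_ne_zero (hLre _ (Multiset.mem_map.2 ⟨j, by simp, rfl⟩) s hs.le)
      simp only [Pi.div_apply]
      have e : ((1 + Complex.I * l j) * (s:ℂ)⁻¹ + 1) = (1 + Complex.I * l j + (s:ℂ)) / s := by
        field_simp
      rw [e]
      field_simp
    have hsum := tendsto_finset_sum Finset.univ (fun j (_ : j ∈ Finset.univ) => hterm j)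
    have h3 := ((inv_tendsto.const_mul (Complex.I * N)).add (hsum.const_mul (Complex.I * N))).const_add 1
    simp only [Finset.sum_const_zero, mul_zero, add_zero] at h3
    refine h3.congr' ?_
    filter_upwards [eventually_gt_atTop (0:ℝ)] with s hs
    have : (s:ℂ) ≠ 0 := by exact_mod_cast hs.ne'
    simp only [g]
    field_simp
    ring
  have hH : H 0 = 0 := by
    apply lift_zero H
    · exact (arg_cont R hRslit).sub ((arg_cont L hLre).add hgcont)
    · intro s hs
      have e1 := angle_prod (R.map (fun z => z + (s:ℂ))) (by
        intro z hz
        obtain ⟨w, hw, rfl⟩ := Multiset.mem_map.1 hz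
        exact hRslit0 w hw s hs)
      have hLne : ∀ z ∈ L.map (fun z => z + (s:ℂ)), z ≠ 0 := by
        intro z hz
        obtain ⟨w, hw, rfl⟩ := Multiset.mem_map.1 hz
        exact Complex.slitPlane_ne_zero (hLre w hw s hs)
      have e2 := angle_prod (L.map (fun z => z + (s:ℂ))) hLne
      have hLp : (L.map (fun z => z + (s:ℂ))).prod ≠ 0 :=
        Multiset.prod_ne_zero (fun h => hLne 0 h rfl)
      rw [hdet s hs, Complex.arg_mul_coe_angle hLp (Complex.slitPlane_ne_zero (hgslit s hs)), e2] at e1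
      have mm : ∀ X : Multiset ℂ, Multiset.map Complex.arg (X.map (fun z => z + (s:ℂ))) =
          X.map (fun z => Complex.arg (z + s)) := fun X => Multiset.map_map _ _ _
      rw [mm, mm] at e1
      simp only [H]
      rw [Real.Angle.coe_sub, Real.Angle.coe_add, sub_eq_zero]
      exact e1.symm
    · have := (arg_lim R).sub ((arg_lim L).add hglim)
      simpa using this
  have hdetne : M.det ≠ 0 := by
    have := hdet 0 le_rfl
    rw [hR, prod_roots_add] at this
    simp only [Complex.ofReal_zero, zero_smul, add_zero] at this
    rw [this]
    apply mul_ne_zero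
    · apply Multiset.prod_ne_zero
      intro h
      obtain ⟨w, hw, h2⟩ := Multiset.mem_map.1 h
      have := hLre w hw 0 le_rfl
      subst h2
      simp at this
    · exact Complex.slitPlane_ne_zero (by simpa using hgslit 0 le_rfl)
  have hst : spaceTimeAngle (Amat N p S) = (R.map Complex.arg).sum := by
    unfold spaceTimeAngle
    rw [if_neg hdetne]
  have hg0 : Complex.arg (g 0) = π / 2 := by
    simp only [g]
    rw [Complex.arg_eq_pi_div_two_iff]
    simp [hN]
  have hL0 : (L.map (fun z => Complex.arg (z + ((0:ℝ):ℂ)))).sum = liftedAngle S := by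
    rw [liftedAngle_eq S hS]
    simp only [L, Multiset.map_map, Function.comp_def, Complex.ofReal_zero, add_zero, arg_one_add_I]
    rfl
  rw [hst]
  simp only [H, hL0, hg0] at hH
  simp only [Complex.ofReal_zero, add_zero] at hH
  linarith

lemma spaceTimeAngle_diag {n : ℕ} (k N : ℝ) (hk : 0 < k) :
    spaceTimeAngle (Matrix.diagonal (fun i : Fin (n+1) => if i = 0 then -k else N)) < n * π / 2 := by
  have h1 : cmat (Matrix.diagonal (fun i : Fin (n+1) => if i = 0 then -k else N)) =
      Matrix.diagonal (fun i : Fin (n+1) => if i = 0 then -(Complex.I * k) else 1 + Complex.I * N) := by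
    ext i j
    by_cases h : i = j
    · subst h
      by_cases h0 : i = 0 <;> simp [cmat, Inmat, h0]
    · simp [cmat, Inmat, h]
  set d : Fin (n+1) → ℂ := fun i => if i = 0 then -(Complex.I * k) else 1 + Complex.I * N with hd
  have hroots : (∏ i, (Polynomial.X - Polynomial.C (d i))).roots = Finset.univ.val.map d := by
    rw [← Polynomial.roots_multiset_prod_X_sub_C (Finset.univ.val.map d), Multiset.map_map]; rfl
  unfold spaceTimeAngle
  rw [h1, Matrix.det_diagonal, Matrix.charpoly_diagonal, hroots]
  rw [if_neg]
  · have : ((Finset.univ.val.map d).map Complex.arg).sum = ∑ i : Fin (n+1), Complex.arg (d i) := by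
      rw [Multiset.map_map]; rfl
    rw [this, Fin.sum_univ_succ]
    have h0 : Complex.arg (d 0) = -(π / 2) := by
      rw [Complex.arg_eq_neg_pi_div_two_iff]
      simp [hd, hk]
    have hj : ∀ j : Fin n, Complex.arg (d j.succ) ≤ π / 2 := by
      intro j
      rw [Complex.arg_le_pi_div_two_iff]
      left; simp [hd]
    have := Finset.sum_le_sum (fun j (_ : j ∈ Finset.univ) => hj j)
    simp only [Finset.sum_const, Finset.card_univ, Fintype.card_fin, nsmul_eq_mul] at this
    rw [h0]
    linarith [Real.pi_pos]
  · rw [Finset.prod_eq_zero_iff]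
    rintro ⟨i, -, hi⟩
    simp only [hd] at hi
    split_ifs at hi
    · simp at hi; exact hk.ne' hi
    · have := congrArg Complex.re hi
      simp at this

lemma arctan_tangent (x m : ℝ) (hx : 0 ≤ x) (hm : 0 ≤ m) :
    Real.arctan x - Real.arctan m ≤ (1 + m^2)⁻¹ * (x - m) := by
  have hm2 : 0 < 1 + m^2 := by positivity
  rcases lt_trichotomy x m with h | h | h
  · obtain ⟨y, hy, he⟩ := exists_hasDerivAt_eq_slope Real.arctan (fun y => 1 / (1 + y^2)) h
      Real.continuous_arctan.continuousOn (fun y _ => Real.hasDerivAt_arctan y)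
    have hy2 : 0 < 1 + y^2 := by positivity
    rw [eq_div_iff (by linarith)] at he
    have : (1 + m^2)⁻¹ ≤ 1 / (1 + y^2) := by
      rw [← one_div]
      apply one_div_le_one_div_of_le hy2
      nlinarith [hy.1, hy.2]
    nlinarith
  · subst h; simp
  · obtain ⟨y, hy, he⟩ := exists_hasDerivAt_eq_slope Real.arctan (fun y => 1 / (1 + y^2)) h
      Real.continuous_arctan.continuousOn (fun y _ => Real.hasDerivAt_arctan y)
    rw [eq_div_iff (by linarith)] at he
    have : 1 / (1 + y^2) ≤ (1 + m^2)⁻¹ := by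
      rw [← one_div]
      apply one_div_le_one_div_of_le hm2
      nlinarith [hy.1, hy.2]
    nlinarith

lemma exists_slope (m : ℝ) : ∃ b : ℝ, 0 < b ∧ ∀ x, 0 ≤ x →
    Real.arctan x - Real.arctan m ≤ b * (x - m) := by
  rcases le_or_gt 0 m with h | h
  · exact ⟨(1 + m^2)⁻¹, by positivity, fun x hx => arctan_tangent x m hx h⟩
  · refine ⟨1, one_pos, fun x hx => ?_⟩
    have h1 := arctan_tangent x 0 hx le_rfl
    have h2 := arctan_tangent (-m) 0 (by linarith) le_rfl
    simp at h1 h2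
    linarith

lemma eig_nonneg {n : ℕ} (c : ℝ) (hc : ((n:ℝ) - 1) * π / 2 ≤ c) (S : Matrix (Fin n) (Fin n) ℝ)
    (hS : S.IsHermitian) (h : c ≤ liftedAngle S) (k : Fin n) : 0 ≤ hS.eigenvalues k := by
  rw [liftedAngle_eq S hS, ← Finset.add_sum_erase _ _ (Finset.mem_univ k)] at h
  have h1 : ∑ j ∈ Finset.univ.erase k, Real.arctan (hS.eigenvalues j) ≤
      ∑ j ∈ Finset.univ.erase k, π / 2 :=
    Finset.sum_le_sum fun j _ => (Real.arctan_lt_pi_div_two _).le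
  rw [Finset.sum_const, Finset.card_erase_of_mem (Finset.mem_univ k), Finset.card_univ,
    Fintype.card_fin, nsmul_eq_mul, Nat.cast_sub (by have := k.2; omega)] at h1
  simp only [Nat.cast_one] at h1
  have : 0 ≤ Real.arctan (hS.eigenvalues k) := by linarith
  exact Real.arctan_nonneg.1 this

lemma separation {n : ℕ} (c : ℝ) (hc : ((n:ℝ) - 1) * π / 2 ≤ c) (B : Matrix (Fin n) (Fin n) ℝ)
    (hB : B.IsHermitian) :
    ∃ P : Matrix (Fin n) (Fin n) ℝ, IsUnit P.det ∧ ∀ S : Matrix (Fin n) (Fin n) ℝ, S.IsHermitian →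
      c ≤ liftedAngle S → (Pᵀ * B * P).trace + (c - liftedAngle B) ≤ (Pᵀ * S * P).trace := by
  obtain ⟨U, hU, hU', hBU⟩ := spec_real B hB
  set m := hB.eigenvalues with hm
  choose b hb hb' using fun j => exists_slope (m j)
  refine ⟨U * diagonal (fun j => √(b j)), ?_, ?_⟩
  · rw [det_mul, det_diagonal]
    apply IsUnit.mul
    · have : U.det * Uᵀ.det = 1 := by rw [← det_mul, hU, det_one]
      exact IsUnit.of_mul_eq_one _ this
    · exact isUnit_iff_ne_zero.2 (Finset.prod_ne_zero_iff.2 fun j _ => (Real.sqrt_pos.2 (hb j)).ne')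
  · intro S hS hcS
    obtain ⟨W, hW, hW', hSW⟩ := spec_real S hS
    set l := hS.eigenvalues with hl
    have hl0 : ∀ k, 0 ≤ l k := eig_nonneg c hc S hS hcS
    have htr : ∀ X : Matrix (Fin n) (Fin n) ℝ,
        ((U * diagonal (fun j => √(b j)))ᵀ * X * (U * diagonal (fun j => √(b j)))).trace =
        ∑ j, b j * (Uᵀ * X * U) j j := by
      intro X
      have : (U * diagonal (fun j => √(b j)))ᵀ * X * (U * diagonal (fun j => √(b j))) =
          diagonal (fun j => √(b j)) * (Uᵀ * X * U) * diagonal (fun j => √(b j)) := by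
        rw [transpose_mul, diagonal_transpose]
        simp only [Matrix.mul_assoc]
      rw [this, Matrix.trace]
      apply Finset.sum_congr rfl
      intro j _
      rw [Matrix.diag_apply, Matrix.mul_diagonal, Matrix.diagonal_mul]
      have := Real.mul_self_sqrt (hb j).le
      linear_combination ((Uᵀ * X * U) j j) * this
    rw [htr, htr]
    have h1 : Uᵀ * B * U = diagonal m := by
      rw [hBU]
      calc Uᵀ * (U * diagonal m * Uᵀ) * U = (Uᵀ * U) * diagonal m * (Uᵀ * U) := by
            simp only [Matrix.mul_assoc]
        _ = _ := by rw [hU']; simp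
    set Z := Uᵀ * W with hZ
    have h2 : Uᵀ * S * U = Z * diagonal l * Zᵀ := by
      rw [hSW, hZ, transpose_mul, transpose_transpose]
      simp only [Matrix.mul_assoc]
    have hZ1 : Z * Zᵀ = 1 := by
      rw [hZ, transpose_mul, transpose_transpose]
      calc Uᵀ * W * (Wᵀ * U) = Uᵀ * (W * Wᵀ) * U := by simp only [Matrix.mul_assoc]
        _ = 1 := by rw [hW]; simp [hU']
    have hZ2 : Zᵀ * Z = 1 := mul_eq_one_comm.1 hZ1
    have hr : ∀ j, ∑ k, Z j k ^ 2 = 1 := by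
      intro j
      have := congrFun (congrFun hZ1 j) j
      simpa [Matrix.mul_apply, sq] using this
    have hcol : ∀ k, ∑ j, Z j k ^ 2 = 1 := by
      intro k
      have := congrFun (congrFun hZ2 k) k
      simpa [Matrix.mul_apply, sq] using this
    have h3 : ∀ j, (Z * diagonal l * Zᵀ) j j = ∑ k, Z j k ^ 2 * l k := by
      intro j
      rw [Matrix.mul_apply]
      apply Finset.sum_congr rfl
      intro k _
      rw [Matrix.mul_diagonal, transpose_apply]; ring
    rw [h1, h2]
    simp only [h3, diagonal_apply_eq]
    have key : ∑ j, ∑ k, Z j k ^ 2 * (Real.arctan (l k) - Real.arctan (m j)) ≤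
        ∑ j, ∑ k, Z j k ^ 2 * (b j * (l k - m j)) :=
      Finset.sum_le_sum fun j _ => Finset.sum_le_sum fun k _ =>
        mul_le_mul_of_nonneg_left (hb' j _ (hl0 k)) (sq_nonneg _)
    have e1 : ∑ j, ∑ k, Z j k ^ 2 * (Real.arctan (l k) - Real.arctan (m j)) =
        liftedAngle S - liftedAngle B := by
      rw [liftedAngle_eq S hS, liftedAngle_eq B hB]
      simp only [mul_sub, Finset.sum_sub_distrib]
      congr 1
      · rw [Finset.sum_comm]
        apply Finset.sum_congr rfl
        intro k _
        rw [← Finset.sum_mul, hcol, one_mul]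
      · apply Finset.sum_congr rfl
        intro k _
        rw [← Finset.sum_mul, hr, one_mul]
    have e2 : ∑ j, ∑ k, Z j k ^ 2 * (b j * (l k - m j)) =
        ∑ j, b j * (∑ k, Z j k ^ 2 * l k) - ∑ j, b j * m j := by
      rw [← Finset.sum_sub_distrib]
      apply Finset.sum_congr rfl
      intro j _
      have : b j * m j = b j * m j * ∑ k, Z j k ^ 2 := by rw [hr, mul_one]
      rw [this, Finset.mul_sum, Finset.mul_sum, ← Finset.sum_sub_distrib]
      apply Finset.sum_congr rfl
      intro k _
      ring
    rw [e1, e2] at key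
    linarith

theorem ereal_add_le (e : EReal) (r s : ℝ) : e + (r:EReal) ≤ (s:EReal) ↔ e ≤ ((s - r : ℝ) : EReal) := by
  induction e using EReal.rec with
  | bot => simp
  | top => rw [EReal.top_add_coe]; simp only [top_le_iff, EReal.coe_ne_top]
  | coe x =>
    rw [← EReal.coe_add, EReal.coe_le_coe_iff, EReal.coe_le_coe_iff]
    constructor <;> intro h <;> linarith

/-- The quadratic form of a matrix. -/
noncomputable def qf {m : ℕ} (A : Matrix (Fin m) (Fin m) ℝ) (z : Fin m → ℝ) : ℝ := z ⬝ᵥ A *ᵥ z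

theorem qf_eq_sum {m : ℕ} (A : Matrix (Fin m) (Fin m) ℝ) (z : Fin m → ℝ) :
    qf A z = ∑ i, ∑ j, z i * z j * A i j := by
  simp only [qf, dotProduct, mulVec, Finset.mul_sum]
  exact Finset.sum_congr rfl fun i _ => Finset.sum_congr rfl fun j _ => by ring

theorem qf_contDiff {m : ℕ} (A : Matrix (Fin m) (Fin m) ℝ) {k : WithTop ℕ∞}: ContDiff ℝ k (qf A) := by
  have : qf A = fun z => ∑ i, ∑ j, z i * z j * A i j := funext (qf_eq_sum A)
  rw [this]; fun_prop

theorem qf_continuous {m : ℕ} (A : Matrix (Fin m) (Fin m) ℝ) : Continuous (qf A) :=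
  (qf_contDiff A (k := 0)).continuous

theorem dot_symm {m : ℕ} {A : Matrix (Fin m) (Fin m) ℝ} (hA : A.IsSymm) (x y : Fin m → ℝ) :
    x ⬝ᵥ A *ᵥ y = y ⬝ᵥ A *ᵥ x := by
  conv_lhs => rw [← hA.eq]
  rw [Matrix.mulVec_transpose, dotProduct_comm, ← Matrix.dotProduct_mulVec]

theorem qf_add {m : ℕ} {A : Matrix (Fin m) (Fin m) ℝ} (hA : A.IsSymm) (x y : Fin m → ℝ) :
    qf A (x + y) = qf A x + 2 * (x ⬝ᵥ A *ᵥ y) + qf A y := by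
  simp only [qf, Matrix.mulVec_add, add_dotProduct, dotProduct_add]
  rw [dot_symm hA y x]; ring

theorem qf_sub {m : ℕ} {A : Matrix (Fin m) (Fin m) ℝ} (hA : A.IsSymm) (x y : Fin m → ℝ) :
    qf A (x - y) = qf A x - 2 * (x ⬝ᵥ A *ᵥ y) + qf A y := by
  simp only [qf, Matrix.mulVec_sub, sub_dotProduct, dotProduct_sub]
  rw [dot_symm hA y x]; ring

theorem hessian_quad {m : ℕ} {A : Matrix (Fin m) (Fin m) ℝ} (hA : A.IsSymm) (x : Fin m → ℝ) :
    hessianMatrix (fun z => -(1/2) * qf A z) x = -A := by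
  set b := ((Matrix.toLinearMap₂' ℝ A : (Fin m → ℝ) →ₗ[ℝ] (Fin m → ℝ) →ₗ[ℝ] ℝ)).toContinuousBilinearMap with hb
  have hbv : ∀ x y, b x y = x ⬝ᵥ A *ᵥ y := by
    intro x y; rw [hb]; simp [Matrix.toLinearMap₂'_apply']
  have h1 : ∀ z, HasFDerivAt (fun z => -(1/2) * qf A z) (-(b z)) z := by
    intro z
    have := ((b.hasFDerivAt_of_bilinear (hasFDerivAt_id z) (hasFDerivAt_id z))).const_mul (-(1/2) : ℝ)
    have e1 : (fun z => -(1/2) * qf A z) = (fun y => -(1 / 2) * (b (id y)) (id y)) := by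
      ext z; simp [hbv, qf]
    rw [e1]
    refine this.congr_fderiv ?_
    ext1 y
    simp [hbv]
    rw [dot_symm hA y z]; ring
  have h2 : fderiv ℝ (fun z => -(1/2) * qf A z) = fun z => (-b) z := by
    ext1 z; rw [(h1 z).fderiv]; rfl
  ext i j
  simp only [hessianMatrix, Matrix.of_apply]
  rw [iteratedFDeriv_two_apply, h2]
  rw [ContinuousLinearMap.fderiv]
  simp [hbv]

theorem typeF_quad {m : ℕ} {F : Set (Matrix (Fin m) (Fin m) ℝ)} {U : Set (Fin m → ℝ)}
    {u : (Fin m → ℝ) → EReal} (hu : IsTypeF F U u) {A : Matrix (Fin m) (Fin m) ℝ} (hA : A.IsSymm)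
    (hAF : A ∉ F) (a : (Fin m → ℝ) →ᵃ[ℝ] ℝ) (K : Set (Fin m → ℝ)) (hK : IsCompact K) (hKU : K ⊆ U)
    (hb : ∀ z ∈ frontier K, u z ≤ ((a z + 1/2 * qf A z : ℝ) : EReal)) :
    ∀ z ∈ K, u z ≤ ((a z + 1/2 * qf A z : ℝ) : EReal) := by
  have key := hu.2.2 (fun z => -(1/2) * qf A z) (contDiff_const.mul (qf_contDiff A)).contDiffOn
    (by
      intro x _
      rw [hessian_quad hA]
      refine ⟨by simpa [Matrix.IsSymm] using hA, ?_⟩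
      rw [neg_neg]
      intro h
      exact hAF (h.2.self_of_nhds hA)) a K hK hKU
  intro z hz
  have := key (fun x hx => by
    rw [ereal_add_le]
    convert hb x hx using 2; ring) z hz
  rw [ereal_add_le] at this
  convert this using 2; ring

theorem typeF_touch {m : ℕ} [NeZero m] {F : Set (Matrix (Fin m) (Fin m) ℝ)} {U : Set (Fin m → ℝ)} (hU : IsOpen U)
    {u : (Fin m → ℝ) → EReal} (hu : IsTypeF F U u) {A : Matrix (Fin m) (Fin m) ℝ} (hA : A.IsSymm)
    (hAF : A ∉ F) (z0 : Fin m → ℝ) (hz0 : z0 ∈ U) (u0 : ℝ) (hu0 : (u0 : EReal) ≤ u z0) (L : (Fin m → ℝ) →ₗ[ℝ] ℝ)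
    (η : ℝ) (hη : 0 < η) (ht : ∀ᶠ z in nhds z0, u z ≤ ((u0 + L (z - z0) + 1/2 * qf A (z - z0)
      - η * ‖z - z0‖^2 : ℝ) : EReal)) : False := by
  obtain ⟨r, hr, hball⟩ := Metric.nhds_basis_closedBall.mem_iff.1 (ht.and (hU.mem_nhds hz0))
  set a : (Fin m → ℝ) →ᵃ[ℝ] ℝ := (L - Matrix.toLinearMap₂' ℝ A z0).toAffineMap +
    AffineMap.const ℝ _ (u0 - L z0 + 1/2 * qf A z0 - η * r^2) with ha
  have hav : ∀ z, a z + 1/2 * qf A z = u0 + L (z - z0) + 1/2 * qf A (z - z0) - η * r^2 := by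
    intro z
    rw [qf_sub hA, dot_symm hA z z0, ha]
    simp [Matrix.toLinearMap₂'_apply']
    ring
  have := typeF_quad hu hA hAF a (Metric.closedBall z0 r) (isCompact_closedBall _ _)
    (fun z hz => (hball hz).2) (by
      intro z hz
      have hz' : ‖z - z0‖ = r := by
        have := Metric.frontier_closedBall_subset_sphere hz
        simpa [dist_eq_norm] using this
      have hz2 : z ∈ Metric.closedBall z0 r := by simp [dist_eq_norm, hz']
      have := (hball hz2).1
      rwa [hav, ← hz']) z0 (Metric.mem_closedBall_self hr.le)
  rw [hav] at this
  have h2 := hu0.trans this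
  rw [EReal.coe_le_coe_iff] at h2
  have : 0 < η * r^2 := by positivity
  simp [qf] at h2
  linarith

theorem taylor2 {E : Type*} [NormedAddCommGroup E] [NormedSpace ℝ E] {f : E → ℝ} {f' : E → E →L[ℝ] ℝ}
    {f'' : E →L[ℝ] E →L[ℝ] ℝ} {x0 : E} (h1 : ∀ᶠ x in nhds x0, HasFDerivAt f (f' x) x)
    (h2 : HasFDerivAt f' f'' x0) {ε : ℝ} (hε : 0 < ε) :
    ∀ᶠ x in nhds x0, |f x - f x0 - f' x0 (x - x0) - 1/2 * f'' (x - x0) (x - x0)| ≤ ε * ‖x - x0‖^2 := by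
  have hs : ∀ v w, f'' v w = f'' w v := second_derivative_symmetric_of_eventually h1 h2
  have h3 : ∀ᶠ x in nhds x0, ‖f' x - f' x0 - f'' (x - x0)‖ ≤ ε * ‖x - x0‖ := by
    have := h2.isLittleO.def hε
    exact this
  obtain ⟨r, hr, hball⟩ := Metric.nhds_basis_ball.mem_iff.1 (h1.and h3)
  filter_upwards [Metric.ball_mem_nhds x0 hr] with x hx
  set g : E → ℝ := fun y => f y - f' x0 (y - x0) - 1/2 * f'' (y - x0) (y - x0) with hg
  have hg' : ∀ y ∈ Metric.ball x0 r, HasFDerivAt g (f' y - f' x0 - f'' (y - x0)) y := by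
    intro y hy
    have a1 := (hball hy).1
    have i1 : HasFDerivAt (fun y : E => y - x0) (ContinuousLinearMap.id ℝ E) y :=
      (hasFDerivAt_id y).sub_const x0
    have a2 := (f' x0).hasFDerivAt.comp y i1
    have a3 := (f''.hasFDerivAt_of_bilinear i1 i1).const_mul (1/2 : ℝ)
    refine ((a1.sub a2).sub a3).congr_fderiv ?_
    ext1 w
    simp
    rw [hs w y, hs w x0]; ring
  set ρ := ‖x - x0‖ with hρ
  have hsub : Metric.closedBall x0 ρ ⊆ Metric.ball x0 r := by
    apply Metric.closedBall_subset_ball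
    simpa [dist_eq_norm] using hx
  have := (convex_closedBall x0 ρ).norm_image_sub_le_of_norm_hasFDerivWithin_le (f := g) (C := ε * ρ)
    (fun y hy => (hg' y (hsub hy)).hasFDerivWithinAt)
    (fun y hy => by
      refine (hball (hsub hy)).2.trans ?_
      have : ‖y - x0‖ ≤ ρ := by simpa [dist_eq_norm] using hy
      gcongr) (Metric.mem_closedBall_self (norm_nonneg _))
      (show x ∈ Metric.closedBall x0 ρ by simp [dist_eq_norm, hρ])
  rw [Real.norm_eq_abs] at this
  simp only [hg, sub_self, map_zero] at this
  convert this using 1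
  · congr 1; simp; ring
  · ring

theorem bilin_qf {m : ℕ} (b : (Fin m → ℝ) →L[ℝ] (Fin m → ℝ) →L[ℝ] ℝ) (H : Matrix (Fin m) (Fin m) ℝ)
    (hH : ∀ i j, H i j = b (Pi.single i 1) (Pi.single j 1)) (z : Fin m → ℝ) : b z z = qf H z := by
  have hz : z = ∑ i, z i • (Pi.single i 1 : Fin m → ℝ) := by
    ext k; simp [Finset.sum_apply, Pi.single_apply]
  conv_lhs => rw [hz]
  rw [qf_eq_sum]
  simp only [map_sum, map_smul, ContinuousLinearMap.sum_apply, ContinuousLinearMap.smul_apply, smul_eq_mul, hH, Finset.mul_sum]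
  rw [Finset.sum_comm]
  exact Finset.sum_congr rfl fun i _ => Finset.sum_congr rfl fun j _ => by ring

theorem taylor_hess {m : ℕ} {w : (Fin m → ℝ) → ℝ} {D : Set (Fin m → ℝ)} (hD : IsOpen D)
    (hw : ContDiffOn ℝ 2 w D) {x0 : Fin m → ℝ} (hx : x0 ∈ D) {ε : ℝ} (hε : 0 < ε) :
    (hessianMatrix w x0).IsSymm ∧ ∀ᶠ x in nhds x0, |w x - w x0 - fderiv ℝ w x0 (x - x0) - 1/2 * qf (hessianMatrix w x0) (x - x0)| ≤ ε * ‖x - x0‖^2 := by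
  have h1 : ∀ᶠ x in nhds x0, HasFDerivAt w (fderiv ℝ w x) x := by
    filter_upwards [hD.mem_nhds hx] with x hx
    exact ((hw.contDiffAt (hD.mem_nhds hx)).differentiableAt (by norm_num)).hasFDerivAt
  have h2 : HasFDerivAt (fderiv ℝ w) (fderiv ℝ (fderiv ℝ w) x0) x0 := by
    have : ContDiffAt ℝ 1 (fderiv ℝ w) x0 :=
      (hw.contDiffAt (hD.mem_nhds hx)).fderiv_right (by norm_num)
    exact (this.differentiableAt (by norm_num)).hasFDerivAt
  have hH : ∀ i j, hessianMatrix w x0 i j = fderiv ℝ (fderiv ℝ w) x0 (Pi.single i 1) (Pi.single j 1) := by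
    intro i j
    simp [hessianMatrix, iteratedFDeriv_two_apply]
  constructor
  · ext i j
    rw [Matrix.transpose_apply, hH, hH, second_derivative_symmetric_of_eventually h1 h2]
  · filter_upwards [taylor2 h1 h2 hε] with x hx
    rwa [bilin_qf _ _ hH] at hx

theorem coord_sq_le {m : ℕ} (z : Fin m → ℝ) (i j : Fin m) : |z i * z j| ≤ ‖z‖^2 := by
  rw [abs_mul, sq]
  exact mul_le_mul (norm_le_pi_norm z i) (norm_le_pi_norm z j) (abs_nonneg _) (norm_nonneg _)

theorem qf_bound {m : ℕ} (B : Matrix (Fin m) (Fin m) ℝ) (κ : ℝ) (h : ∀ i j, |B i j| ≤ κ)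
    (z : Fin m → ℝ) : |qf B z| ≤ m * m * κ * ‖z‖^2 := by
  rw [qf_eq_sum]
  calc |∑ i, ∑ j, z i * z j * B i j| ≤ ∑ i, ∑ j, |z i * z j * B i j| :=
        (Finset.abs_sum_le_sum_abs _ _).trans (Finset.sum_le_sum fun i _ => Finset.abs_sum_le_sum_abs _ _)
    _ ≤ ∑ i : Fin m, ∑ j : Fin m, ‖z‖^2 * κ := by
        refine Finset.sum_le_sum fun i _ => Finset.sum_le_sum fun j _ => ?_
        rw [abs_mul]
        exact mul_le_mul (coord_sq_le z i j) (h i j) (abs_nonneg _) (by positivity)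
    _ = m * m * κ * ‖z‖^2 := by simp; ring

theorem norm_sq_le_sum {m : ℕ} (z : Fin m → ℝ) : ‖z‖^2 ≤ ∑ i, z i ^ 2 := by
  have h0 : 0 ≤ ∑ i, z i ^ 2 := Finset.sum_nonneg fun i _ => sq_nonneg _
  have : ‖z‖ ≤ √(∑ i, z i ^ 2) := by
    rw [pi_norm_le_iff_of_nonneg (Real.sqrt_nonneg _)]
    intro i
    rw [Real.norm_eq_abs]
    apply Real.abs_le_sqrt
    exact Finset.single_le_sum (f := fun i => z i ^ 2) (fun i _ => sq_nonneg _) (Finset.mem_univ i)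
  calc ‖z‖^2 ≤ (√(∑ i, z i ^ 2))^2 := by gcongr
    _ = _ := Real.sq_sqrt h0

theorem typeF_of_no_touch {m : ℕ} {F : Set (Matrix (Fin m) (Fin m) ℝ)} {D : Set (Fin m → ℝ)} (hD : IsOpen D)
    {v : (Fin m → ℝ) → EReal} (hv : ∀ x ∈ D, v x ≠ ⊤) (husc : UpperSemicontinuousOn v D)
    (hno : ∀ x0 ∈ D, ∀ v0 : ℝ, v x0 = v0 → ∀ B : Matrix (Fin m) (Fin m) ℝ, B.IsSymm → B ∉ F →
      ∀ L : (Fin m → ℝ) →ₗ[ℝ] ℝ, ∀ η : ℝ, 0 < η →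
      (∀ᶠ x in nhds x0, v x ≤ ((v0 + L (x - x0) + 1/2 * qf B (x - x0) - η * ‖x - x0‖^2 : ℝ) : EReal)) →
      False) : IsTypeF F D v := by
  refine ⟨hv, husc, ?_⟩
  intro w hw hess a K hK hKD hbd x hx
  by_contra hlt
  push Not at hlt
  simp only [] at hlt hbd
  have hxv : ∃ r : ℝ, v x = r := by
    induction hvx : v x using EReal.rec with
    | bot => rw [hvx] at hlt; simp at hlt
    | top => exact absurd hvx (hv x (hKD hx))
    | coe r => exact ⟨r, rfl⟩
  obtain ⟨r, hr⟩ := hxv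
  rw [hr, ← EReal.coe_add, EReal.coe_lt_coe_iff] at hlt
  set δ := r + w x - a x with hδ
  have hδ0 : 0 < δ := by linarith
  set sq : (Fin m → ℝ) → ℝ := fun x => ∑ i, x i ^ 2 with hsq
  have hsqc : Continuous sq := by fun_prop
  have hsq0 : ∀ x, 0 ≤ sq x := fun x => Finset.sum_nonneg fun i _ => sq_nonneg _
  obtain ⟨R, hR⟩ := (hK.image hsqc).bddAbove
  have hR' : ∀ y ∈ K, sq y ≤ R := fun y hy => hR ⟨y, hy, rfl⟩
  have hR0 : 0 ≤ R := (hsq0 x).trans (hR' x hx)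
  set ε := δ / (2 * (R + 1)) with hε
  have hε0 : 0 < ε := by positivity
  have hεR : ε * R < δ := by
    rw [hε, div_mul_eq_mul_div, div_lt_iff₀ (by positivity)]; nlinarith
  have hac : Continuous a := a.continuous_of_finiteDimensional
  have hcont : ContinuousOn (fun y => w y - a y + ε * sq y) K :=
    ((hw.continuousOn.mono hKD).sub hac.continuousOn).add (continuous_const.mul hsqc).continuousOn
  have hGusc : UpperSemicontinuousOn (fun y => v y + ((w y - a y + ε * sq y : ℝ) : EReal)) K := by
    apply UpperSemicontinuousOn.add' (husc.mono hKD)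
    · exact (continuous_coe_real_ereal.comp_continuousOn hcont).upperSemicontinuousOn
    · intro y hy
      exact EReal.continuousAt_add (Or.inr (EReal.coe_ne_bot _)) (Or.inr (EReal.coe_ne_top _))
  obtain ⟨x0, hx0, hmax⟩ := hGusc.exists_isMaxOn ⟨x, hx⟩ hK
  have hmax' : ∀ y ∈ K, v y + ((w y - a y + ε * sq y : ℝ) : EReal) ≤ v x0 + ((w x0 - a x0 + ε * sq x0 : ℝ) : EReal) :=
    fun y hy => hmax hy
  have hx1 := hmax' x hx
  have hx0v : ∃ r : ℝ, v x0 = r := by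
    induction hvx : v x0 using EReal.rec with
    | bot => rw [hvx, hr, ← EReal.coe_add, EReal.bot_add, le_bot_iff] at hx1; exact absurd hx1 (EReal.coe_ne_bot _)
    | top => exact absurd hvx (hv x0 (hKD hx0))
    | coe r => exact ⟨r, rfl⟩
  obtain ⟨v0, hv0⟩ := hx0v
  rw [hr, hv0, ← EReal.coe_add, ← EReal.coe_add, EReal.coe_le_coe_iff] at hx1
  have hx0int : x0 ∈ interior K := by
    by_contra hni
    have hfr : x0 ∈ frontier K := ⟨subset_closure hx0, hni⟩
    have := hbd x0 hfr
    rw [hv0, ← EReal.coe_add, EReal.coe_le_coe_iff] at this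
    have h1 := hsq0 x
    have h2 := hR' x0 hx0
    have h3 : ε * sq x0 ≤ ε * R := by gcongr
    have h4 : 0 ≤ ε * sq x := by positivity
    linarith
  set H := hessianMatrix w x0 with hH
  obtain ⟨hHs, htay⟩ := taylor_hess hD hw (hKD hx0) (ε := ε/4) (by positivity)
  have hHd := hess x0 (hKD hx0)
  have hnots : ¬ ∀ᶠ B in nhds (-H), B.IsSymm → B ∈ F := by
    intro h
    exact hHd.2 ⟨by simpa [Matrix.IsSymm] using hHs, h⟩
  set κ := ε / (2 * ((m:ℝ) * m + 1)) with hκ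
  have hκ0 : 0 < κ := by positivity
  have hκm : m * m * κ ≤ ε / 2 := by
    rw [hκ, mul_div_assoc', div_le_div_iff₀ (by positivity) (by positivity)]
    nlinarith
  have hclose : ∀ᶠ B in nhds (-H), ∀ i j, |(B + H) i j| < κ := by
    rw [eventually_all]; intro i
    rw [eventually_all]; intro j
    have hc : Continuous fun B : Matrix (Fin m) (Fin m) ℝ => |(B + H) i j| := by
      simp only [Matrix.add_apply]
      exact ((continuous_apply_apply i j).add continuous_const).abs
    have := hc.tendsto (-H)
    refine this.eventually_lt_const ?_
    simpa using hκ0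
  rw [not_eventually] at hnots
  obtain ⟨B, hB1, hB2⟩ := (hnots.and_eventually hclose).exists
  push Not at hB1
  refine hno x0 (hKD hx0) v0 hv0 B hB1.1 hB1.2
    (a.linear - (fderiv ℝ w x0 : (Fin m → ℝ) →ₗ[ℝ] ℝ) - (2*ε) • (Matrix.toLinearMap₂' ℝ (1 : Matrix (Fin m) (Fin m) ℝ) x0 : (Fin m → ℝ) →ₗ[ℝ] ℝ)) (ε/2) (by positivity) ?_
  filter_upwards [htay, mem_interior_iff_mem_nhds.1 hx0int] with y hy hyK
  have h1 := hmax' y hyK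
  rw [hv0, ← EReal.coe_add, ereal_add_le] at h1
  refine h1.trans ?_
  rw [EReal.coe_le_coe_iff]
  obtain ⟨ζ, rfl⟩ : ∃ ζ, y = x0 + ζ := ⟨y - x0, by simp⟩
  rw [add_sub_cancel_left] at *
  have e1 : a (x0 + ζ) = a x0 + a.linear ζ := by
    have := a.map_vadd x0 ζ
    simp only [vadd_eq_add] at this
    rw [add_comm x0, this, add_comm]
  have e2 : sq (x0 + ζ) = sq x0 + 2 * (x0 ⬝ᵥ ζ) + sq ζ := by
    simp only [hsq, dotProduct, Finset.mul_sum, Pi.add_apply]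
    rw [← Finset.sum_add_distrib, ← Finset.sum_add_distrib]
    exact Finset.sum_congr rfl fun i _ => by ring
  have e3 := norm_sq_le_sum ζ
  have e4 := qf_bound (B + H) κ (fun i j => (hB2 i j).le) ζ
  have e5 : qf (B + H) ζ = qf B ζ + qf H ζ := by simp [qf, Matrix.add_mulVec, dotProduct_add]
  have e6 : m * m * κ * ‖ζ‖^2 ≤ ε / 2 * ‖ζ‖^2 := by gcongr
  have e7 : ε * ‖ζ‖^2 ≤ ε * sq ζ := by gcongr
  rw [e5] at e4
  have e8 := (abs_le.1 e4).1
  have e9 := (abs_le.1 hy).1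
  rw [e1, e2]
  simp only [LinearMap.sub_apply, LinearMap.smul_apply, Matrix.toLinearMap₂'_apply', Matrix.one_mulVec, smul_eq_mul,
    ContinuousLinearMap.coe_coe]
  nlinarith

section
open MvPolynomial

noncomputable def polyD {n : ℕ} (p : MvPolynomial (Fin n) ℝ) (z : Fin n → ℝ) : (Fin n → ℝ) →L[ℝ] ℝ :=
  ∑ j, (eval z (pderiv j p)) • (ContinuousLinearMap.proj j : (Fin n → ℝ) →L[ℝ] ℝ)

theorem polyD_apply {n : ℕ} (p : MvPolynomial (Fin n) ℝ) (z ζ : Fin n → ℝ) :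
    polyD p z ζ = ∑ j, eval z (pderiv j p) * ζ j := by
  simp [polyD, ContinuousLinearMap.sum_apply]

theorem poly_hasFDerivAt {n : ℕ} (p : MvPolynomial (Fin n) ℝ) (z : Fin n → ℝ) :
    HasFDerivAt (fun z => eval z p) (polyD p z) z := by
  induction p using MvPolynomial.induction_on with
  | C a =>
    simp only [eval_C]
    refine (hasFDerivAt_const a z).congr_fderiv ?_
    ext1 ζ; simp [polyD_apply]
  | add p q hp hq =>
    simp only [map_add]
    refine (hp.add hq).congr_fderiv ?_
    ext1 ζ; simp [polyD_apply, add_mul, Finset.sum_add_distrib]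
  | mul_X p i hp =>
    simp only [map_mul, eval_X]
    have hi : HasFDerivAt (fun z : Fin n → ℝ => z i) (ContinuousLinearMap.proj i : (Fin n → ℝ) →L[ℝ] ℝ) z :=
      (ContinuousLinearMap.proj (R := ℝ) (φ := fun _ : Fin n => ℝ) i).hasFDerivAt
    refine (hp.mul hi).congr_fderiv ?_
    ext1 ζ
    simp [polyD_apply, add_mul, Finset.sum_add_distrib, pderiv_X, Pi.single_apply, Finset.mul_sum, apply_ite]
    ring_nf

theorem poly_continuous {n : ℕ} (p : MvPolynomial (Fin n) ℝ) : Continuous fun z => eval z p :=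
  MvPolynomial.continuous_eval p

noncomputable def polyH {n : ℕ} (p : MvPolynomial (Fin n) ℝ) (z : Fin n → ℝ) : Matrix (Fin n) (Fin n) ℝ :=
  Matrix.of fun i j => eval z (pderiv i (pderiv j p))

theorem poly_taylor {n : ℕ} (p : MvPolynomial (Fin n) ℝ) (z : Fin n → ℝ) :
    (polyH p z).IsSymm ∧ ∀ ε : ℝ, 0 < ε → ∀ᶠ ζ in nhds (0 : Fin n → ℝ),
      |eval (z + ζ) p - eval z p - polyD p z ζ - 1/2 * qf (polyH p z) ζ| ≤ ε * ‖ζ‖^2 := by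
  have h1 : ∀ᶠ x in nhds z, HasFDerivAt (fun z => eval z p) (polyD p x) x :=
    Eventually.of_forall fun x => poly_hasFDerivAt p x
  set f'' : (Fin n → ℝ) →L[ℝ] (Fin n → ℝ) →L[ℝ] ℝ :=
    ∑ j, (polyD (pderiv j p) z).smulRight (ContinuousLinearMap.proj j : (Fin n → ℝ) →L[ℝ] ℝ) with hf''
  have h2 : HasFDerivAt (polyD p) f'' z := by
    unfold polyD
    apply HasFDerivAt.fun_sum
    intro j _
    exact (poly_hasFDerivAt (pderiv j p) z).smul_const (ContinuousLinearMap.proj j : (Fin n → ℝ) →L[ℝ] ℝ)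
  have hH : ∀ i j, polyH p z i j = f'' (Pi.single i 1) (Pi.single j 1) := by
    intro i j
    simp [polyH, hf'', ContinuousLinearMap.sum_apply, polyD_apply, Pi.single_apply]
  constructor
  · ext i j
    rw [Matrix.transpose_apply, hH, hH, second_derivative_symmetric_of_eventually h1 h2]
  · intro ε hε
    have h3 := taylor2 h1 h2 hε
    have h4 : Tendsto (fun ζ => z + ζ) (nhds 0) (nhds z) := by
      have : Continuous fun ζ : Fin n → ℝ => z + ζ := by fun_prop
      simpa using this.tendsto 0
    filter_upwards [h4.eventually h3] with ζ hζ
    rw [add_sub_cancel_left, bilin_qf _ _ hH] at hζ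
    exact hζ

noncomputable def lapl {n : ℕ} (p : MvPolynomial (Fin n) ℝ) : MvPolynomial (Fin n) ℝ :=
  ∑ j, pderiv j (pderiv j p)

theorem trace_polyH {n : ℕ} (p : MvPolynomial (Fin n) ℝ) (z : Fin n → ℝ) :
    (polyH p z).trace = eval z (lapl p) := by
  simp [polyH, lapl, Matrix.trace]

theorem lapl_add {n : ℕ} (p q : MvPolynomial (Fin n) ℝ) : lapl (p + q) = lapl p + lapl q := by
  simp [lapl, Finset.sum_add_distrib]

theorem lapl_smul {n : ℕ} (a : ℝ) (p : MvPolynomial (Fin n) ℝ) : lapl (a • p) = a • lapl p := by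
  simp [lapl, Finset.smul_sum]

noncomputable def sqp (n : ℕ) : MvPolynomial (Fin n) ℝ := ∑ j, X j ^ 2

theorem eval_sqp {n : ℕ} (z : Fin n → ℝ) : eval z (sqp n) = ∑ j, z j ^ 2 := by simp [sqp]

theorem lapl_sqp (n : ℕ) : lapl (sqp n) = C (2 * (n:ℝ)) := by
  have : ∀ j, pderiv j (sqp n) = C 2 * X j := by
    intro j
    simp [sqp, pderiv_pow, pderiv_X, Pi.single_apply]
    rfl
  simp [lapl, this]
  rw [mul_comm]

theorem hess_nonpos {n : ℕ} (p : MvPolynomial (Fin n) ℝ) (z : Fin n → ℝ)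
    (h : ∀ᶠ ζ in nhds (0 : Fin n → ℝ), eval (z + ζ) p ≤ eval z p) : eval z (lapl p) ≤ 0 := by
  rw [← trace_polyH]
  apply Finset.sum_nonpos
  intro j _
  simp only [Matrix.diag_apply]
  apply le_of_forall_pos_le_add
  intro ε hε
  rw [zero_add]
  have ht := (poly_taylor p z).2 (ε/2) (by positivity)
  have h4 : ∀ σ : ℝ, Tendsto (fun s : ℝ => (s * σ) • (Pi.single j 1 : Fin n → ℝ)) (nhds 0) (nhds 0) := by
    intro σ
    have : Continuous fun s : ℝ => (s * σ) • (Pi.single j 1 : Fin n → ℝ) := by fun_prop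
    simpa using this.tendsto 0
  have h5 := ((h4 1).eventually (ht.and h)).and ((h4 (-1)).eventually (ht.and h))
  have h6 : ∀ᶠ s in nhdsWithin (0:ℝ) (Set.Ioi 0), 0 < s := eventually_mem_nhdsWithin
  obtain ⟨s, ⟨⟨a1, a2⟩, ⟨a3, a4⟩⟩, hs⟩ := ((h5.filter_mono nhdsWithin_le_nhds).and h6).exists
  have hn : ∀ σ : ℝ, ‖(s * σ) • (Pi.single j 1 : Fin n → ℝ)‖ = |s * σ| := by
    intro σ; rw [norm_smul, Pi.norm_single]; simp
  have hq : ∀ σ : ℝ, qf (polyH p z) ((s * σ) • (Pi.single j 1 : Fin n → ℝ)) = (s*σ)^2 * polyH p z j j := by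
    intro σ; rw [qf_eq_sum]; simp [Pi.single_apply]; left; ring
  have b1 := (abs_le.1 a1).1
  have b3 := (abs_le.1 a3).1
  rw [hn, hq, map_smul] at b1 b3
  simp only [sq_abs, smul_eq_mul] at b1 b3
  have : s^2 * (polyH p z j j) ≤ s^2 * ε := by nlinarith
  exact le_of_mul_le_mul_left this (by positivity)

theorem isCompact_ball' (n : ℕ) : IsCompact {z : Fin n → ℝ | ∑ j, z j ^ 2 ≤ 1} := by
  refine Metric.isCompact_of_isClosed_isBounded (isClosed_le (by fun_prop) continuous_const) ?_
  refine (Metric.isBounded_closedBall (x := (0 : Fin n → ℝ)) (r := 1)).subset ?_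
  intro z hz
  have := norm_sq_le_sum z
  have h2 : ‖z‖^2 ≤ 1 := this.trans hz
  simp
  nlinarith [norm_nonneg z]

theorem isCompact_sphere' (n : ℕ) : IsCompact {z : Fin n → ℝ | ∑ j, z j ^ 2 = 1} := by
  refine (isCompact_ball' n).of_isClosed_subset (isClosed_eq (by fun_prop) continuous_const) ?_
  intro z hz
  exact le_of_eq hz

theorem max_principle {n : ℕ} (hn : 0 < n) (h : MvPolynomial (Fin n) ℝ) (hh : lapl h = 0) (M : ℝ)
    (hM : ∀ z : Fin n → ℝ, ∑ j, z j ^ 2 = 1 → eval z h ≤ M) (z : Fin n → ℝ) (hz : ∑ j, z j ^ 2 ≤ 1) :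
    eval z h ≤ M := by
  by_contra hlt
  push Not at hlt
  set ε := (eval z h - M) / 2 with hε
  have hε0 : 0 < ε := by linarith
  set f := h + ε • (sqp n) with hf
  have hfe : ∀ y, eval y f = eval y h + ε * ∑ j, y j ^ 2 := by
    intro y; simp [hf, eval_sqp, smul_eval]
  obtain ⟨z0, hz0, hmax⟩ := (isCompact_ball' n).exists_isMaxOn ⟨z, hz⟩ (poly_continuous f).continuousOn
  have hmax' : ∀ y : Fin n → ℝ, ∑ j, y j ^ 2 ≤ 1 → eval y f ≤ eval z0 f := fun y hy => hmax hy
  have hz0' : ∑ j, z0 j ^ 2 < 1 := by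
    refine lt_of_le_of_ne hz0 fun heq => ?_
    have h1 := hmax' z hz
    rw [hfe, hfe, heq] at h1
    have h2 := hM z0 heq
    have h3 : 0 ≤ ∑ j, z j ^ 2 := Finset.sum_nonneg fun i _ => sq_nonneg _
    have h4 : 0 ≤ ε * ∑ j, z j ^ 2 := by positivity
    linarith
  have hev : ∀ᶠ ζ in nhds (0 : Fin n → ℝ), eval (z0 + ζ) f ≤ eval z0 f := by
    have hc : Continuous fun ζ : Fin n → ℝ => ∑ j, (z0 + ζ) j ^ 2 := by
      simp only [Pi.add_apply]; fun_prop
    have : ∀ᶠ ζ in nhds (0 : Fin n → ℝ), ∑ j, (z0 + ζ) j ^ 2 < 1 :=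
      (hc.tendsto 0).eventually_lt_const (by simpa using hz0')
    filter_upwards [this] with ζ hζ
    exact hmax' _ hζ.le
  have := hess_nonpos f z0 hev
  rw [hf, lapl_add, lapl_smul, hh, lapl_sqp] at this
  simp [smul_eval] at this
  have hn' : (0:ℝ) < n := by exact_mod_cast hn
  have : 0 < ε * (2 * (n:ℝ)) := by positivity
  linarith

end

section
open MvPolynomial

theorem totalDegree_pderiv_le' {n : ℕ} (i : Fin n) (p : MvPolynomial (Fin n) ℝ) :
    (pderiv i p).totalDegree ≤ p.totalDegree - 1 := by
  conv_lhs => rw [p.as_sum, map_sum]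
  apply totalDegree_finsetSum_le
  intro s hs
  rw [pderiv_monomial]
  by_cases h : s i = 0
  · simp [h]
  · refine (totalDegree_monomial_le _ _).trans ?_
    have h1 : (s.sum fun _ e => e) ≤ p.totalDegree := le_totalDegree hs
    have h2 : s = (s - Finsupp.single i 1) + Finsupp.single i 1 := by
      ext k
      by_cases hk : k = i
      · subst hk; simp; omega
      · simp [Finsupp.single_apply, Ne.symm hk]
    have h3 : (s.sum fun _ e => e) = ((s - Finsupp.single i 1).sum fun _ e => e) + 1 := by
      conv_lhs => rw [h2]
      rw [Finsupp.sum_add_index' (by simp) (by simp)]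
      simp
    have h4 : ((s - Finsupp.single i 1).sum fun _ => id) = ((s - Finsupp.single i 1).sum fun _ e => e) := rfl
    omega

theorem totalDegree_lapl_le {n : ℕ} (p : MvPolynomial (Fin n) ℝ) :
    (lapl p).totalDegree ≤ p.totalDegree - 2 := by
  apply totalDegree_finsetSum_le
  intro i _
  have h1 := totalDegree_pderiv_le' i p
  have h2 := totalDegree_pderiv_le' i (pderiv i p)
  omega

noncomputable def rp (n : ℕ) : MvPolynomial (Fin n) ℝ := 1 - sqp n

theorem eval_rp {n : ℕ} (z : Fin n → ℝ) : eval z (rp n) = 1 - ∑ j, z j ^ 2 := by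
  simp [rp, eval_sqp]

theorem totalDegree_rp (n : ℕ) : (rp n).totalDegree ≤ 2 := by
  refine (totalDegree_sub _ _).trans (max_le (by simp) ?_)
  apply totalDegree_finsetSum_le
  intro i _
  simp

theorem rp_inj {n : ℕ} (hn : 0 < n) (p : MvPolynomial (Fin n) ℝ) (h : lapl (rp n * p) = 0) : p = 0 := by
  have h0 : ∀ z : Fin n → ℝ, ∑ j, z j ^ 2 = 1 → eval z (rp n * p) = 0 := by
    intro z hz; simp [eval_rp, hz]
  have h1 : ∀ z : Fin n → ℝ, ∑ j, z j ^ 2 ≤ 1 → eval z (rp n * p) = 0 := by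
    intro z hz
    apply le_antisymm
    · exact max_principle hn _ h 0 (fun z hz => (h0 z hz).le) z hz
    · have h' : lapl ((-1 : ℝ) • (rp n * p)) = 0 := by rw [lapl_smul, h, smul_zero]
      have := max_principle hn _ h' 0 (fun z hz => by rw [smul_eval, h0 z hz]; simp) z hz
      rw [smul_eval] at this
      linarith
  refine funext_set (fun _ => Set.Ioo (0:ℝ) (1/((n:ℝ)+1))) (fun _ => Set.Ioo_infinite (by positivity)) ?_
  intro z hz
  have hz' : ∀ i, z i ∈ Set.Ioo (0:ℝ) (1/((n:ℝ)+1)) := fun i => hz i (Set.mem_univ i)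
  have hn' : (1:ℝ) ≤ n := by exact_mod_cast hn
  have hlt : ∑ j, z j ^ 2 < 1 := by
    calc ∑ j, z j ^ 2 ≤ ∑ j : Fin n, (1/((n:ℝ)+1))^2 :=
          Finset.sum_le_sum fun i _ => by
            have := hz' i
            exact pow_le_pow_left₀ this.1.le this.2.le 2
      _ = n / ((n:ℝ)+1)^2 := by simp; field_simp
      _ < 1 := by
        rw [div_lt_one (by positivity)]; nlinarith
  have := h1 z hlt.le
  rw [map_mul, eval_rp, mul_eq_zero] at this
  rcases this with h | h
  · linarith
  · simpa using h

theorem dirichlet {n : ℕ} (hn : 0 < n) (q : MvPolynomial (Fin n) ℝ) :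
    ∃ h : MvPolynomial (Fin n) ℝ, lapl h = 0 ∧ ∀ z : Fin n → ℝ, ∑ j, z j ^ 2 = 1 → eval z h = eval z q := by
  set k := q.totalDegree with hk
  set W := restrictTotalDegree (Fin n) ℝ k with hW
  let T : MvPolynomial (Fin n) ℝ →ₗ[ℝ] MvPolynomial (Fin n) ℝ :=
    { toFun := fun p => lapl (rp n * p)
      map_add' := fun p q => by rw [mul_add, lapl_add]
      map_smul' := fun a p => by rw [mul_smul_comm, lapl_smul]; rfl }
  have hT : ∀ p, T p = lapl (rp n * p) := fun p => rfl
  have hmaps : ∀ p ∈ W, T p ∈ W := by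
    intro p hp
    rw [hW, mem_restrictTotalDegree] at hp ⊢
    rw [hT]
    have h1 := totalDegree_lapl_le (rp n * p)
    have h2 := totalDegree_mul (rp n) p
    have h3 := totalDegree_rp n
    omega
  let T' : W →ₗ[ℝ] W := T.restrict hmaps
  have hinj : Function.Injective T' := by
    rw [← LinearMap.ker_eq_bot, LinearMap.ker_eq_bot']
    intro p hp
    have : T p = 0 := by
      have := congrArg Subtype.val hp
      simpa [T'] using this
    ext1
    exact rp_inj hn _ this
  haveI : Module.Finite ℝ W := inferInstance
  have hsurj := (LinearMap.injective_iff_surjective (f := T')).1 hinj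
  have hq : lapl q ∈ W := by
    rw [hW, mem_restrictTotalDegree]
    have h1 := totalDegree_lapl_le q
    omega
  obtain ⟨⟨p, hpW⟩, hp⟩ := hsurj ⟨lapl q, hq⟩
  have hp' : lapl (rp n * p) = lapl q := by
    have := congrArg Subtype.val hp
    simpa [T', hT] using this
  refine ⟨q + (-1 : ℝ) • (rp n * p), ?_, ?_⟩
  · rw [lapl_add, lapl_smul, hp']; simp
  · intro z hz
    simp [smul_eval, eval_rp, hz]

end

section
open MvPolynomial

theorem harmonic_selection {n : ℕ} (hn : 0 < n) (W : Set (ℝ × (Fin n → ℝ))) (hW : IsOpen W)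
    (hconv : ∀ z : Fin n → ℝ, ∑ j, z j ^ 2 = 1 → Convex ℝ {t | (t, z) ∈ W})
    (hne : ∀ z : Fin n → ℝ, ∑ j, z j ^ 2 = 1 → ∃ t, (t, z) ∈ W) :
    ∃ h : MvPolynomial (Fin n) ℝ, lapl h = 0 ∧ ∀ z : Fin n → ℝ, ∑ j, z j ^ 2 = 1 → (eval z h, z) ∈ W := by
  set S : Set (Fin n → ℝ) := {z | ∑ j, z j ^ 2 = 1} with hS
  haveI : CompactSpace S := isCompact_iff_compactSpace.1 (isCompact_sphere' n)
  obtain ⟨g, hg⟩ := exists_continuous_forall_mem_convex_of_local_const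
    (X := S) (E := ℝ) (t := fun z => {t | (t, (z : Fin n → ℝ)) ∈ W}) (fun z => hconv z z.2) (by
      intro z
      obtain ⟨t, ht⟩ := hne z z.2
      refine ⟨t, ?_⟩
      have hc : Continuous fun y : S => (t, (y : Fin n → ℝ)) := by fun_prop
      exact hc.continuousAt.eventually (hW.mem_nhds ht))
  have hKc : IsCompact (Set.range fun z : S => (g z, (z : Fin n → ℝ))) := isCompact_range (by fun_prop)
  obtain ⟨δ, hδ, hthick⟩ := hKc.exists_thickening_subset_open hW (by
    rintro _ ⟨z, rfl⟩; exact hg z)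
  let crd : Fin n → C(S, ℝ) := fun i => ⟨fun z => (z : Fin n → ℝ) i, (continuous_apply i).comp continuous_subtype_val⟩
  let Φ : MvPolynomial (Fin n) ℝ →ₐ[ℝ] C(S, ℝ) := aeval crd
  have hΦ : ∀ p (z : S), Φ p z = eval (z : Fin n → ℝ) p := by
    intro p z
    induction p using MvPolynomial.induction_on with
    | C a => simp [Φ]
    | add p q hp hq => simp [hp, hq]
    | mul_X p i hp => simp [hp, Φ, crd]
  have hsep : Φ.range.SeparatesPoints := by
    intro x y hxy
    have : ∃ i, (x : Fin n → ℝ) i ≠ (y : Fin n → ℝ) i := by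
      by_contra hcon
      push Not at hcon
      exact hxy (Subtype.ext (funext hcon))
    obtain ⟨i, hi⟩ := this
    exact ⟨Φ (X i), ⟨Φ (X i), ⟨X i, rfl⟩, rfl⟩, by simpa [hΦ] using hi⟩
  have htop := ContinuousMap.subalgebra_topologicalClosure_eq_top_of_separatesPoints Φ.range hsep
  have hgm : g ∈ closure (Φ.range : Set C(S, ℝ)) := by
    have : g ∈ Φ.range.topologicalClosure := by rw [htop]; trivial
    exact this
  obtain ⟨_, ⟨q, rfl⟩, hq⟩ := Metric.mem_closure_iff.1 hgm δ hδ
  obtain ⟨h, hh, hhq⟩ := dirichlet hn q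
  refine ⟨h, hh, fun z hz => hthick ?_⟩
  rw [hhq z hz, Metric.mem_thickening_iff]
  refine ⟨(g ⟨z, hz⟩, z), ⟨⟨z, hz⟩, rfl⟩, ?_⟩
  rw [Prod.dist_eq, dist_self, max_lt_iff]
  refine ⟨?_, hδ⟩
  have := (ContinuousMap.dist_lt_iff hδ).1 hq ⟨z, hz⟩
  rw [dist_comm]
  have e : eval z q = Φ q ⟨z, hz⟩ := (hΦ q ⟨z, hz⟩).symm
  rw [e]
  exact this

end

theorem usc_lt_nhds {m : ℕ} {U : Set (Fin m → ℝ)} (hU : IsOpen U) {u : (Fin m → ℝ) → EReal}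
    (husc : UpperSemicontinuousOn u U) {φ : (Fin m → ℝ) → ℝ} {z : Fin m → ℝ} (hz : z ∈ U)
    (hφ : ContinuousAt φ z) (h : u z < (φ z : EReal)) : ∀ᶠ y in nhds z, u y < (φ y : EReal) := by
  obtain ⟨r, h1, h2⟩ := EReal.lt_iff_exists_real_btwn.1 h
  rw [EReal.coe_lt_coe_iff] at h2
  have h3 := husc z hz r h1
  rw [hU.nhdsWithin_eq hz] at h3
  filter_upwards [h3, hφ.eventually_const_lt h2] with y a1 a2
  exact a1.trans (EReal.coe_lt_coe_iff.2 a2)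

theorem usc_bdd {m : ℕ} {U K : Set (Fin m → ℝ)} {u : (Fin m → ℝ) → EReal}
    (husc : UpperSemicontinuousOn u U) (htop : ∀ x ∈ U, u x ≠ ⊤) (hK : IsCompact K) (hKU : K ⊆ U) :
    ∃ M : ℝ, 0 < M ∧ ∀ z ∈ K, u z ≤ (M : EReal) := by
  rcases K.eq_empty_or_nonempty with rfl | hne
  · exact ⟨1, one_pos, by simp⟩
  obtain ⟨x0, hx0, hmax⟩ := (husc.mono hKU).exists_isMaxOn hne hK
  refine ⟨max (u x0).toReal 1, by positivity, fun z hz => (show u z ≤ u x0 from hmax hz).trans ?_⟩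
  exact (EReal.le_coe_toReal (htop x0 (hKU hx0))).trans (EReal.coe_le_coe_iff.2 (le_max_left _ _))

theorem cons_continuous {n : ℕ} : Continuous fun p : ℝ × (Fin n → ℝ) => (Fin.cons p.1 p.2 : Fin (n+1) → ℝ) := by
  refine continuous_pi fun i => ?_
  refine Fin.cases ?_ (fun j => ?_) i
  · simpa using continuous_fst
  · simp only [Fin.cons_succ]; fun_prop

theorem tail_continuous {n : ℕ} : Continuous fun p : Fin (n+1) → ℝ => (Fin.tail p : Fin n → ℝ) := by
  refine continuous_pi fun i => ?_
  simp only [Fin.tail]; fun_prop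

theorem isOpen_prod {n : ℕ} {I : Set ℝ} (hI : IsOpen I) {D : Set (Fin n → ℝ)} (hD : IsOpen D) :
    IsOpen {y : Fin (n+1) → ℝ | y 0 ∈ I ∧ Fin.tail y ∈ D} :=
  (hI.preimage (continuous_apply 0)).inter (hD.preimage tail_continuous)

theorem sublevel_convex (n : ℕ) (c : ℝ) (hc : (n : ℝ) * π / 2 ≤ c)
    (I : Set ℝ) (hIopen : IsOpen I) (hIconv : Convex ℝ I)
    (D : Set (Fin n → ℝ)) (hDopen : IsOpen D) (u : (Fin (n+1) → ℝ) → EReal)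
    (hu : IsTypeF (calF n c) {y | y 0 ∈ I ∧ Fin.tail y ∈ D} u) (y : Fin n → ℝ) (hy : y ∈ D) (φ : ℝ) :
    Convex ℝ {t : ℝ | t ∈ I ∧ u (Fin.cons t y) < (φ : EReal)} := by
  set U := {y : Fin (n+1) → ℝ | y 0 ∈ I ∧ Fin.tail y ∈ D} with hU
  have hUo : IsOpen U := isOpen_prod hIopen hDopen
  apply Set.OrdConnected.convex
  constructor
  rintro t1 ⟨ht1, hu1⟩ t2 ⟨ht2, hu2⟩ t ht
  have hIcc : Set.Icc t1 t2 ⊆ I := hIconv.ordConnected.out ht1 ht2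
  refine ⟨hIcc ht, ?_⟩
  obtain ⟨r1, h11, h12⟩ := EReal.lt_iff_exists_real_btwn.1 hu1
  obtain ⟨r2, h21, h22⟩ := EReal.lt_iff_exists_real_btwn.1 hu2
  rw [EReal.coe_lt_coe_iff] at h12 h22
  set φ' := max r1 r2 with hφ'
  have hφφ : φ' < φ := max_lt h12 h22
  have hv1 : u (Fin.cons t1 y) < (φ' : EReal) := h11.trans_le (EReal.coe_le_coe_iff.2 (le_max_left _ _))
  have hv2 : u (Fin.cons t2 y) < (φ' : EReal) := h21.trans_le (EReal.coe_le_coe_iff.2 (le_max_right _ _))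
  have hev : ∀ s ∈ I, u (Fin.cons s y) < (φ' : EReal) → ∀ᶠ x in nhds y, u (Fin.cons s x) < (φ' : EReal) := by
    intro s hs hlt
    have hc1 : Continuous fun x : Fin n → ℝ => (Fin.cons s x : Fin (n+1) → ℝ) :=
      cons_continuous.comp (by fun_prop : Continuous fun x : Fin n → ℝ => (s, x))
    exact hc1.continuousAt.eventually (usc_lt_nhds hUo hu.2.1 (φ := fun _ => φ') (z := Fin.cons s y)
      ⟨by simpa using hs, by simpa using hy⟩ continuousAt_const hlt)
  obtain ⟨r, hr, hball⟩ := Metric.nhds_basis_closedBall.mem_iff.1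
    (((hev t1 ht1 hv1).and (hev t2 ht2 hv2)).and (hDopen.mem_nhds hy))
  set K : Set (Fin (n+1) → ℝ) := {z | z 0 ∈ Set.Icc t1 t2 ∧ Fin.tail z ∈ Metric.closedBall y r} with hK
  have hKc : IsCompact K := by
    have : K = (fun p : ℝ × (Fin n → ℝ) => (Fin.cons p.1 p.2 : Fin (n+1) → ℝ)) ''
        (Set.Icc t1 t2 ×ˢ Metric.closedBall y r) := by
      ext z; constructor
      · rintro ⟨h1, h2⟩
        exact ⟨(z 0, Fin.tail z), ⟨h1, h2⟩, Fin.cons_self_tail z⟩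
      · rintro ⟨p, ⟨h1, h2⟩, rfl⟩
        exact ⟨by simpa using h1, by simpa using h2⟩
    rw [this]
    exact (isCompact_Icc.prod (isCompact_closedBall _ _)).image cons_continuous
  have hKU : K ⊆ U := fun z hz => ⟨hIcc hz.1, (hball hz.2).2⟩
  obtain ⟨M, hM0, hM⟩ := usc_bdd hu.2.1 hu.1 hKc hKU
  -- constants
  set d := (t - t1) * (t2 - t) with hd
  have hd0 : 0 ≤ d := mul_nonneg (by linarith [ht.1]) (by linarith [ht.2])
  set k := (φ - φ') / (d + 1) with hk
  have hk0 : 0 < k := div_pos (by linarith) (by positivity)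
  have hkd : 1/2 * k * d < φ - φ' := by
    have : k * (d + 1) = φ - φ' := by rw [hk]; field_simp
    nlinarith
  set N := 2 * (M + |φ'|) / r^2 with hN
  have hNr : 1/2 * N * r^2 = M + |φ'| := by rw [hN]; field_simp
  set A : Matrix (Fin (n+1)) (Fin (n+1)) ℝ := Matrix.diagonal (fun i : Fin (n+1) => if i = 0 then -k else N) with hA
  have hAs : A.IsSymm := Matrix.isSymm_diagonal _
  have hAF : A ∉ calF n c := by
    intro h
    have := spaceTimeAngle_diag (n := n) k N hk0
    have h2 := h.2
    linarith
  set L : (Fin (n+1) → ℝ) →ₗ[ℝ] ℝ := (1/2 * k * (t1 + t2)) • (LinearMap.proj 0)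
    - N • ∑ j : Fin n, y j • (LinearMap.proj j.succ : (Fin (n+1) → ℝ) →ₗ[ℝ] ℝ) with hL
  set a : (Fin (n+1) → ℝ) →ᵃ[ℝ] ℝ := L.toAffineMap +
    AffineMap.const ℝ _ (φ' - 1/2 * k * (t1 * t2) + 1/2 * N * ∑ j, y j ^ 2) with ha
  have hQ : ∀ z, a z + 1/2 * qf A z = φ' + 1/2 * k * ((z 0 - t1) * (t2 - z 0))
      + 1/2 * N * ∑ j, (Fin.tail z j - y j)^2 := by
    intro z
    have e1 : qf A z = -k * z 0 ^ 2 + N * ∑ j : Fin n, z j.succ ^ 2 := by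
      rw [qf, hA, dotProduct, Fin.sum_univ_succ]
      simp [Matrix.mulVec_diagonal, Finset.mul_sum]
      congr 1
      · ring
      · exact Finset.sum_congr rfl fun j _ => by ring
    have e2 : ∑ j, (Fin.tail z j - y j)^2 = ∑ j : Fin n, z j.succ ^ 2 - 2 * ∑ j, y j * z j.succ + ∑ j, y j ^ 2 := by
      rw [Finset.mul_sum, ← Finset.sum_sub_distrib, ← Finset.sum_add_distrib]
      exact Finset.sum_congr rfl fun j _ => by simp only [Fin.tail]; ring
    have e3 : L z = 1/2 * k * (t1 + t2) * z 0 - N * ∑ j, y j * z j.succ := by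
      simp [hL, LinearMap.sum_apply]
    have e4 : a z = L z + (φ' - 1/2 * k * (t1 * t2) + 1/2 * N * ∑ j, y j ^ 2) := by
      simp [ha]
    rw [e4, e3, e1, e2]; ring
  have hN0 : 0 ≤ N := by positivity
  have key := typeF_quad hu hAs hAF a K hKc hKU (by
    intro z hz
    have hzK : z ∈ K := hKc.isClosed.frontier_subset hz
    rw [hQ]
    have hn1 : 0 ≤ (z 0 - t1) * (t2 - z 0) :=
      mul_nonneg (by linarith [hzK.1.1]) (by linarith [hzK.1.2])
    have hn1' : 0 ≤ 1/2 * k * ((z 0 - t1) * (t2 - z 0)) := by positivity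
    have hn2 : 0 ≤ ∑ j, (Fin.tail z j - y j)^2 := Finset.sum_nonneg fun _ _ => sq_nonneg _
    have hn2' : 0 ≤ 1/2 * N * ∑ j, (Fin.tail z j - y j)^2 := by positivity
    by_cases h1 : z 0 = t1
    · have := (hball hzK.2).1.1
      rw [← h1, Fin.cons_self_tail] at this
      exact this.le.trans (EReal.coe_le_coe_iff.2 (by linarith))
    by_cases h2 : z 0 = t2
    · have := (hball hzK.2).1.2
      rw [← h2, Fin.cons_self_tail] at this
      exact this.le.trans (EReal.coe_le_coe_iff.2 (by linarith))
    by_cases h3 : dist (Fin.tail z) y = r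
    · refine (hM z hzK).trans (EReal.coe_le_coe_iff.2 ?_)
      have := norm_sq_le_sum (Fin.tail z - y)
      rw [← dist_eq_norm, h3] at this
      simp only [Pi.sub_apply] at this
      have h5 : 1/2 * N * r^2 ≤ 1/2 * N * ∑ j, (Fin.tail z j - y j)^2 := by gcongr
      have h6 := neg_abs_le φ'
      linarith
    · exfalso
      apply hz.2
      rw [mem_interior]
      refine ⟨{z | z 0 ∈ Set.Ioo t1 t2 ∧ Fin.tail z ∈ Metric.ball y r}, ?_, isOpen_prod isOpen_Ioo Metric.isOpen_ball, ?_⟩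
      · intro w hw
        exact ⟨Set.Ioo_subset_Icc_self hw.1, Metric.ball_subset_closedBall hw.2⟩
      · exact ⟨⟨lt_of_le_of_ne hzK.1.1 (Ne.symm h1), lt_of_le_of_ne hzK.1.2 h2⟩, lt_of_le_of_ne hzK.2 h3⟩)
    (Fin.cons t y) ⟨by simpa using ht, by simpa using hr.le⟩
  rw [hQ] at key
  refine key.trans_lt (EReal.coe_lt_coe_iff.2 ?_)
  simp only [Fin.cons_zero, Fin.tail_cons, sub_self]
  simp
  simp only [hd] at hkd
  linarith

section
open MvPolynomial

theorem qf_Amat {n : ℕ} (N : ℝ) (p : Fin n → ℝ) (S : Matrix (Fin n) (Fin n) ℝ) (ω : Fin (n+1) → ℝ) :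
    qf (Amat N p S) ω = N * (ω 0 - ∑ j, p j * ω j.succ)^2 + qf S (Fin.tail ω) := by
  rw [qf_eq_sum, qf_eq_sum, Fin.sum_univ_succ]
  simp only [Fin.sum_univ_succ (n := n)]
  simp only [Amat, Matrix.of_apply, Fin.cases_zero, Fin.cases_succ]
  have e0 : ∑ i : Fin n, ∑ j : Fin n, ω i.succ * ω j.succ * (S i j + N * p i * p j)
      = ∑ i : Fin n, ∑ j : Fin n, Fin.tail ω i * Fin.tail ω j * S i j + N * (∑ j, p j * ω j.succ)^2 := by
    rw [sq, Finset.sum_mul_sum, Finset.mul_sum, ← Finset.sum_add_distrib]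
    refine Finset.sum_congr rfl fun i _ => ?_
    rw [Finset.mul_sum, ← Finset.sum_add_distrib]
    exact Finset.sum_congr rfl fun j _ => by simp only [Fin.tail]; ring
  have e1 : ∑ j : Fin n, ω 0 * ω j.succ * (-N * p j) = -N * ω 0 * ∑ j, p j * ω j.succ := by
    rw [Finset.mul_sum]; exact Finset.sum_congr rfl fun j _ => by ring
  have e2 : ∑ j : Fin n, ω j.succ * ω 0 * (-N * p j) = -N * ω 0 * ∑ j, p j * ω j.succ := by
    rw [Finset.mul_sum]; exact Finset.sum_congr rfl fun j _ => by ring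
  rw [Finset.sum_add_distrib, e0, e1, e2]
  ring

theorem Amat_symm {n : ℕ} (N : ℝ) (p : Fin n → ℝ) (S : Matrix (Fin n) (Fin n) ℝ) (hS : S.IsSymm) :
    (Amat N p S).IsSymm := by
  ext i j
  rw [Matrix.transpose_apply]
  refine Fin.cases ?_ (fun i => ?_) i <;> refine Fin.cases ?_ (fun j => ?_) j <;> simp [Amat]
  rw [hS.apply i j]; ring

theorem isHermitian_iff_symm {n : ℕ} (S : Matrix (Fin n) (Fin n) ℝ) : S.IsHermitian ↔ S.IsSymm := by
  rw [Matrix.IsHermitian, Matrix.IsSymm, conjTranspose_eq_transpose_of_trivial]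

theorem inj_lower {m n : ℕ} (T : (Fin m → ℝ) →ₗ[ℝ] ℝ × (Fin n → ℝ)) (hT : Function.Injective T) :
    ∃ δ : ℝ, 0 < δ ∧ ∀ ω, δ * ‖ω‖^2 ≤ ‖T ω‖^2 := by
  obtain ⟨K, hK, hT'⟩ := T.exists_antilipschitzWith (LinearMap.ker_eq_bot.2 hT)
  have hK' : (0:ℝ) < K := by exact_mod_cast hK
  refine ⟨1 / (K:ℝ)^2, by positivity, fun ω => ?_⟩
  have h := hT'.le_mul_dist ω 0
  rw [map_zero, dist_zero_right, dist_zero_right] at h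
  rw [one_div, inv_mul_le_iff₀ (by positivity), ← mul_pow]
  gcongr

theorem square_taylor {n : ℕ} (h : MvPolynomial (Fin n) ℝ) (z1 : Fin n → ℝ) (s κ : ℝ) (hκ : 0 < κ) :
    ∀ᶠ q in nhds (0 : ℝ × (Fin n → ℝ)), (s + q.1 - (eval (z1 + q.2) h - eval z1 h))^2 ≤
      s^2 + 2 * s * (q.1 - polyD h z1 q.2) + (q.1 - polyD h z1 q.2)^2 - s * qf (polyH h z1) q.2
        + κ * ∑ j, q.2 j ^ 2 := by
  set R := polyH h z1 with hR
  set κ0 := κ / (4 * (|s| + 1)) with hκ0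
  have hκ00 : 0 < κ0 := by positivity
  have hκs : 2 * |s| * κ0 ≤ κ / 2 := by
    have : κ0 * (4 * (|s| + 1)) = κ := by rw [hκ0]; field_simp
    nlinarith
  set Rm := ∑ i, ∑ j, |R i j| with hRm
  have hRb : ∀ i j, |R i j| ≤ Rm := fun i j =>
    (Finset.single_le_sum (f := fun j => |R i j|) (fun _ _ => abs_nonneg _) (Finset.mem_univ j)).trans
      (Finset.single_le_sum (f := fun i => ∑ j, |R i j|) (fun _ _ => Finset.sum_nonneg fun _ _ => abs_nonneg _) (Finset.mem_univ i))
  have hRm0 : 0 ≤ Rm := Finset.sum_nonneg fun _ _ => Finset.sum_nonneg fun _ _ => abs_nonneg _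
  set C := n * n * Rm + κ0 with hC
  have hC0 : 0 < C := by positivity
  have ht := (poly_taylor h z1).2 κ0 hκ00
  have hsnd : Tendsto (fun q : ℝ × (Fin n → ℝ) => q.2) (nhds 0) (nhds 0) := continuous_snd.tendsto _
  have hc : Continuous fun q : ℝ × (Fin n → ℝ) => |eval (z1 + q.2) h - eval z1 h - polyD h z1 q.2|
      + 2 * |q.1 - polyD h z1 q.2| := by
    have h1 : Continuous fun q : ℝ × (Fin n → ℝ) => eval (z1 + q.2) h :=
      (poly_continuous h).comp (by fun_prop)
    fun_prop
  have hsm : ∀ᶠ q in nhds (0 : ℝ × (Fin n → ℝ)), |eval (z1 + q.2) h - eval z1 h - polyD h z1 q.2|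
      + 2 * |q.1 - polyD h z1 q.2| < κ / (2 * C) := by
    refine (hc.tendsto 0).eventually_lt_const ?_
    simp
    positivity
  filter_upwards [hsnd.eventually ht, hsm] with q h1 h2
  obtain ⟨τ, ζ⟩ := q
  simp only at h1 h2 ⊢
  set l := τ - polyD h z1 ζ with hl
  set g := eval (z1 + ζ) h - eval z1 h - polyD h z1 ζ with hg
  have hq := qf_bound R Rm hRb ζ
  have hgC : |g| ≤ C * ‖ζ‖^2 := by
    have : g = (g - 1/2 * qf R ζ) + 1/2 * qf R ζ := by ring
    calc |g| ≤ |g - 1/2 * qf R ζ| + |1/2 * qf R ζ| := by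
          conv_lhs => rw [this]
          exact abs_add_le _ _
      _ ≤ κ0 * ‖ζ‖^2 + n * n * Rm * ‖ζ‖^2 := by
          refine add_le_add h1 ?_
          rw [abs_mul]
          have : |(1/2 : ℝ)| ≤ 1 := by rw [abs_of_pos] <;> norm_num
          calc |(1/2:ℝ)| * |qf R ζ| ≤ 1 * |qf R ζ| := by gcongr
            _ ≤ _ := by rw [one_mul]; exact hq
      _ = C * ‖ζ‖^2 := by rw [hC]; ring
  have hn := norm_sq_le_sum ζ
  have e1 : s + τ - (eval (z1 + ζ) h - eval z1 h) = s + l - g := by rw [hl, hg]; ring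
  have e2 : -(2 * s * (g - 1/2 * qf R ζ)) ≤ κ / 2 * ‖ζ‖^2 := by
    calc -(2 * s * (g - 1/2 * qf R ζ)) ≤ |2 * s * (g - 1/2 * qf R ζ)| := neg_le_abs _
      _ = 2 * |s| * |g - 1/2 * qf R ζ| := by rw [abs_mul, abs_mul]; norm_num
      _ ≤ 2 * |s| * (κ0 * ‖ζ‖^2) := by gcongr
      _ = 2 * |s| * κ0 * ‖ζ‖^2 := by ring
      _ ≤ κ / 2 * ‖ζ‖^2 := by gcongr
  have e3 : g^2 - 2 * l * g ≤ κ / 2 * ‖ζ‖^2 := by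
    have a1 : g^2 - 2 * l * g ≤ |g| * (|g| + 2 * |l|) := by
      have b1 : g^2 = |g| * |g| := by rw [abs_mul_abs_self]; ring
      have b2 : -(l * g) ≤ |l| * |g| := by rw [← abs_mul]; exact neg_le_abs _
      nlinarith
    have a2 : |g| * (|g| + 2 * |l|) ≤ (C * ‖ζ‖^2) * (κ / (2 * C)) :=
      mul_le_mul hgC h2.le (by positivity) (by positivity)
    have a3 : (C * ‖ζ‖^2) * (κ / (2 * C)) = κ / 2 * ‖ζ‖^2 := by field_simp
    linarith
  have e4 : κ * ‖ζ‖^2 ≤ κ * ∑ j, ζ j ^ 2 := by gcongr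
  rw [e1]
  nlinarith

theorem sepP {n : ℕ} (c : ℝ) (hc : ((n:ℝ)-1)*π/2 ≤ c) (B : Matrix (Fin n) (Fin n) ℝ) (hB : B.IsHermitian)
    (hlt : liftedAngle B < c) (x0 : Fin n → ℝ) (G : Set (Fin n → ℝ)) (hG : G ∈ nhds x0) :
    ∃ (P : Matrix (Fin n) (Fin n) ℝ) (γ : ℝ), 0 < γ ∧ IsUnit P.det ∧
      (∀ S, S.IsHermitian → c ≤ liftedAngle S → (Pᵀ*B*P).trace + γ ≤ (Pᵀ*S*P).trace) ∧
      ∀ z : Fin n → ℝ, ∑ j, z j ^ 2 ≤ 1 → x0 + P *ᵥ z ∈ G := by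
  obtain ⟨P0, hP0, hsep⟩ := separation c hc B hB
  have hcont : Continuous fun q : ℝ × (Fin n → ℝ) => x0 + q.1 • (P0 *ᵥ q.2) := by fun_prop
  obtain ⟨C, hC⟩ := ((isCompact_ball' n).image (f := fun z => P0 *ᵥ z) (by fun_prop)).isBounded.exists_norm_le
  obtain ⟨ρ, hρ, hball⟩ := Metric.nhds_basis_closedBall.mem_iff.1 hG
  have hC0 : 0 ≤ C := (norm_nonneg _).trans (hC (P0 *ᵥ 0) ⟨0, by simp, rfl⟩)
  set r := ρ / (C + 1) with hr
  have hr0 : 0 < r := by positivity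
  refine ⟨r • P0, r^2 * (c - liftedAngle B), by have : 0 < c - liftedAngle B := by linarith
                                                positivity, ?_, ?_, ?_⟩
  · rw [Matrix.det_smul]
    exact IsUnit.mul (IsUnit.pow _ (isUnit_iff_ne_zero.2 hr0.ne')) hP0
  · intro S hS hcS
    have := hsep S hS hcS
    have e : ∀ X : Matrix (Fin n) (Fin n) ℝ, ((r • P0)ᵀ * X * (r • P0)).trace = r^2 * (P0ᵀ * X * P0).trace := by
      intro X
      rw [Matrix.transpose_smul, Matrix.smul_mul, Matrix.smul_mul, Matrix.mul_smul, smul_smul, Matrix.trace_smul,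
        smul_eq_mul, sq]
    rw [e, e, ← mul_add]
    gcongr
  · intro z hz
    apply hball
    rw [Metric.mem_closedBall, dist_eq_norm, add_sub_cancel_left, Matrix.smul_mulVec, norm_smul, Real.norm_eq_abs, abs_of_pos hr0]
    calc r * ‖P0 *ᵥ z‖ ≤ r * C := by
          gcongr; exact hC _ ⟨z, hz, rfl⟩
      _ ≤ ρ := by
        rw [hr, div_mul_eq_mul_div, div_le_iff₀ (by positivity)]; nlinarith

end

section
open MvPolynomial

set_option maxHeartbeats 1600000 in
/-- Second-order part: a maximum point of `u - φ - N/2 (t - h)²` is impossible. -/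
theorem no_interior_max (n : ℕ) (c : ℝ) (U : Set (Fin (n+1) → ℝ)) (hU : IsOpen U)
    (u : (Fin (n+1) → ℝ) → EReal) (hu : IsTypeF (calF n c) U u)
    (B P : Matrix (Fin n) (Fin n) ℝ) (hB : B.IsSymm) (hP : IsUnit P.det) (γ : ℝ) (hγ : 0 < γ)
    (hsep : ∀ S : Matrix (Fin n) (Fin n) ℝ, S.IsHermitian → c - π/2 ≤ liftedAngle S →
      (Pᵀ*B*P).trace + γ ≤ (Pᵀ*S*P).trace)
    (h : MvPolynomial (Fin n) ℝ) (hh : lapl h = 0) (x0 : Fin n → ℝ) (L : (Fin n → ℝ) →ₗ[ℝ] ℝ)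
    (N : ℝ) (hN : 0 < N) (y1 : Fin (n+1) → ℝ) (hy1 : y1 ∈ U) (u1 : ℝ) (hu1 : u y1 = u1)
    (hmax : ∀ᶠ y in nhds y1, u y ≤ ((u1
      + (L (Fin.tail y - x0) + 1/2 * qf B (Fin.tail y - x0) + N/2 * (y 0 - eval (P⁻¹ *ᵥ (Fin.tail y - x0)) h)^2)
      - (L (Fin.tail y1 - x0) + 1/2 * qf B (Fin.tail y1 - x0) + N/2 * (y1 0 - eval (P⁻¹ *ᵥ (Fin.tail y1 - x0)) h)^2) : ℝ) : EReal)) :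
    False := by
  set Q := P⁻¹ with hQ
  have hQP : Q * P = 1 := Matrix.nonsing_inv_mul P hP
  have hPQ : P * Q = 1 := Matrix.mul_nonsing_inv P hP
  set z1 := Q *ᵥ (Fin.tail y1 - x0) with hz1
  set s := y1 0 - eval z1 h with hs
  set R := polyH h z1 with hR
  have hRs : R.IsSymm := (poly_taylor h z1).1
  have hRt : R.trace = 0 := by rw [hR, trace_polyH, hh, map_zero]
  set p : Fin n → ℝ := fun j => eval z1 (pderiv j h) with hp
  set κ := γ / (4 * N * ((n:ℝ) + 1)) with hκ
  have hκ0 : 0 < κ := by positivity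
  set κ' := γ / (4 * ((n:ℝ) + 1)) with hκ'
  have hκ'0 : 0 < κ' := by positivity
  have hκe : (N * κ + κ') * n < γ := by
    have e1 : N * κ * ((n:ℝ)+1) = γ / 4 := by rw [hκ]; field_simp
    have e2 : κ' * ((n:ℝ)+1) = γ / 4 := by rw [hκ']; field_simp
    have e3 : 0 < N * κ := by positivity
    nlinarith
  set Sz : Matrix (Fin n) (Fin n) ℝ := (-(N * s)) • R + (N * κ + κ') • (1 : Matrix (Fin n) (Fin n) ℝ) with hSz
  set Sx := B + Qᵀ * Sz * Q with hSx
  have hSzs : Sz.IsSymm := by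
    rw [hSz]; exact (hRs.smul _).add (Matrix.isSymm_one.smul _)
  have hSxs : Sx.IsSymm := by
    rw [hSx]
    refine hB.add ?_
    rw [Matrix.IsSymm, Matrix.transpose_mul, Matrix.transpose_mul, Matrix.transpose_transpose, hSzs.eq, Matrix.mul_assoc]
  have htr : (Pᵀ * Sx * P).trace = (Pᵀ * B * P).trace + (N * κ + κ') * n := by
    have e1 : Pᵀ * (Qᵀ * Sz * Q) * P = Sz := by
      have : Pᵀ * (Qᵀ * Sz * Q) * P = (Pᵀ * Qᵀ) * Sz * (Q * P) := by simp only [Matrix.mul_assoc]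
      rw [this, ← Matrix.transpose_mul, hQP]; simp
    rw [hSx, Matrix.mul_add, Matrix.add_mul, Matrix.trace_add, e1, hSz, Matrix.trace_add, Matrix.trace_smul, hRt,
      Matrix.trace_smul, Matrix.trace_one]
    simp
  have hang : liftedAngle Sx < c - π/2 := by
    by_contra hcon
    push Not at hcon
    have := hsep Sx ((isHermitian_iff_symm _).2 hSxs) hcon
    rw [htr] at this
    linarith
  set px : Fin n → ℝ := Qᵀ *ᵥ p with hpx
  have hpxv : ∀ ξ : Fin n → ℝ, ∑ j, px j * ξ j = polyD h z1 (Q *ᵥ ξ) := by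
    intro ξ
    rw [polyD_apply]
    change px ⬝ᵥ ξ = p ⬝ᵥ (Q *ᵥ ξ)
    rw [hpx, Matrix.mulVec_transpose, Matrix.dotProduct_mulVec]
  set A := Amat (N + κ') px Sx with hA
  have hAs : A.IsSymm := Amat_symm _ _ _ hSxs
  have hAF : A ∉ calF n c := by
    intro hmem
    have h1 := hmem.2
    rw [hA, spaceTimeAngle_Amat _ (by positivity) _ _ ((isHermitian_iff_symm _).2 hSxs)] at h1
    linarith
  -- linear maps
  set tl : (Fin (n+1) → ℝ) →ₗ[ℝ] (Fin n → ℝ) := LinearMap.funLeft ℝ ℝ Fin.succ with htl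
  have htlv : ∀ ω, tl ω = Fin.tail ω := fun ω => rfl
  set ll : (Fin (n+1) → ℝ) →ₗ[ℝ] ℝ := LinearMap.proj 0 - (polyD h z1 : (Fin n → ℝ) →ₗ[ℝ] ℝ) ∘ₗ Q.mulVecLin ∘ₗ tl with hll
  have hllv : ∀ ω, ll ω = ω 0 - polyD h z1 (Q *ᵥ Fin.tail ω) := by
    intro ω; simp [hll, htlv]
  set T : (Fin (n+1) → ℝ) →ₗ[ℝ] ℝ × (Fin n → ℝ) := ll.prod (Q.mulVecLin ∘ₗ tl) with hT
  have hTv : ∀ ω, T ω = (ll ω, Q *ᵥ Fin.tail ω) := by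
    intro ω; simp [hT, htlv]
  have hTinj : Function.Injective T := by
    rw [← LinearMap.ker_eq_bot, LinearMap.ker_eq_bot']
    intro ω hω
    rw [hTv, Prod.mk_eq_zero] at hω
    have h2 : Fin.tail ω = 0 := by
      have := congrArg (fun v => P *ᵥ v) hω.2
      simpa [Matrix.mulVec_mulVec, hPQ] using this
    have h1 := hω.1
    rw [hllv, h2] at h1
    simp at h1
    rw [← Fin.cons_self_tail ω, h1, h2]
    ext i; refine Fin.cases ?_ (fun j => ?_) i <;> simp
  obtain ⟨δ, hδ, hlow⟩ := inj_lower T hTinj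
  set Lt : (Fin (n+1) → ℝ) →ₗ[ℝ] ℝ :=
    (L + (Matrix.toLinearMap₂' ℝ B (Fin.tail y1 - x0) : (Fin n → ℝ) →ₗ[ℝ] ℝ)) ∘ₗ tl + (N * s) • ll with hLt
  have hLtv : ∀ ω, Lt ω = L (Fin.tail ω) + (Fin.tail y1 - x0) ⬝ᵥ B *ᵥ Fin.tail ω + N * s * ll ω := by
    intro ω; simp [hLt, htlv, Matrix.toLinearMap₂'_apply']
  refine typeF_touch hU hu hAs hAF y1 hy1 u1 hu1.ge Lt (κ' / 2 * δ) (by positivity) ?_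
  have hsq := square_taylor h z1 s κ hκ0
  have hcont : Continuous fun y : Fin (n+1) → ℝ => ((y - y1) 0, Q *ᵥ Fin.tail (y - y1)) := by
    refine Continuous.prodMk ?_ ?_
    · simp only [Pi.sub_apply]; fun_prop
    · have : Continuous fun y : Fin (n+1) → ℝ => Fin.tail (y - y1) := tail_continuous.comp (by fun_prop)
      fun_prop
  have htend : Tendsto (fun y : Fin (n+1) → ℝ => ((y - y1) 0, Q *ᵥ Fin.tail (y - y1))) (nhds y1) (nhds 0) := by
    have := hcont.tendsto y1
    have e : ((y1 - y1) 0, Q *ᵥ Fin.tail (y1 - y1)) = (0 : ℝ × (Fin n → ℝ)) := by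
      have : Fin.tail (y1 - y1) = (0 : Fin n → ℝ) := by ext i; simp [Fin.tail]
      rw [this]; simp
    rwa [e] at this
  filter_upwards [hmax, htend.eventually hsq] with y hy hyq
  refine hy.trans (EReal.coe_le_coe_iff.2 ?_)
  obtain ⟨ω, rfl⟩ : ∃ ω, y = y1 + ω := ⟨y - y1, by simp⟩
  rw [add_sub_cancel_left] at *
  have t1 : Fin.tail (y1 + ω) - x0 = (Fin.tail y1 - x0) + Fin.tail ω := by
    ext i; simp [Fin.tail]; ring
  set ξ : Fin n → ℝ := Fin.tail ω with hξ
  set ζ : Fin n → ℝ := Q *ᵥ ξ with hζ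
  have t2 : Q *ᵥ (Fin.tail (y1 + ω) - x0) = z1 + ζ := by
    rw [t1, Matrix.mulVec_add]
  have t3 : (y1 + ω) 0 - eval (z1 + ζ) h = s + ω 0 - (eval (z1 + ζ) h - eval z1 h) := by
    rw [hs, Pi.add_apply]; ring
  rw [t2, t3, t1, qf_add hB, map_add, hLtv, hA, qf_Amat]
  have t4 : ω 0 - ∑ j, px j * ω j.succ = ll ω := by
    rw [hllv, ← hpxv]; rfl
  have t5 : qf Sx ξ = qf B ξ - N * s * qf R ζ + (N * κ + κ') * ∑ j, ζ j ^ 2 := by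
    have a1 : qf Sx ξ = qf B ξ + qf Sz ζ := by
      simp only [qf, hSx, Matrix.add_mulVec, dotProduct_add]
      congr 1
      rw [← Matrix.mulVec_mulVec, ← Matrix.mulVec_mulVec, Matrix.dotProduct_mulVec, Matrix.vecMul_transpose]
    have a2 : qf Sz ζ = -(N * s) * qf R ζ + (N * κ + κ') * ∑ j, ζ j ^ 2 := by
      simp only [qf, hSz, Matrix.add_mulVec, dotProduct_add, Matrix.smul_mulVec, dotProduct_smul, smul_eq_mul,
        Matrix.one_mulVec]
      congr 2
      simp only [dotProduct]
      exact Finset.sum_congr rfl fun j _ => by ring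
    rw [a1, a2]; ring
  rw [t4, t5]
  have t6 : δ * ‖ω‖^2 ≤ (ll ω)^2 + ∑ j, ζ j ^ 2 := by
    refine (hlow ω).trans ?_
    rw [hTv, Prod.norm_mk]
    have b1 := norm_sq_le_sum ζ
    have b2 : ‖ll ω‖^2 = (ll ω)^2 := by rw [Real.norm_eq_abs, sq_abs]
    rcases max_cases ‖ll ω‖ ‖ζ‖ with ⟨hm, _⟩ | ⟨hm, _⟩
    · rw [hm, b2]; nlinarith [sq_nonneg ‖ζ‖]
    · rw [hm]; nlinarith [sq_nonneg (ll ω)]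
  have t7 : ω 0 - polyD h z1 ζ = ll ω := (hllv ω).symm
  rw [t7] at hyq
  have t8 := mul_le_mul_of_nonneg_left hyq (by positivity : 0 ≤ N / 2)
  have t9 := mul_le_mul_of_nonneg_left t6 (by positivity : 0 ≤ κ' / 2)
  ring_nf at t8 t9 ⊢
  linarith

end

section
open MvPolynomial

set_option maxHeartbeats 1600000 in
theorem main_no_touch (n : ℕ) (hn : 0 < n) (c : ℝ)
    (hc : (n : ℝ) * π / 2 ≤ c)
    (I : Set ℝ) (hIopen : IsOpen I) (hIconv : Convex ℝ I)
    (D : Set (Fin n → ℝ)) (hDopen : IsOpen D)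
    (u : (Fin (n+1) → ℝ) → EReal)
    (hu : IsTypeF (calF n c) {y | y 0 ∈ I ∧ Fin.tail y ∈ D} u)
    (x0 : Fin n → ℝ) (hx0 : x0 ∈ D) (v0 : ℝ) (hv0 : (⨅ t : I, u (Fin.cons (t : ℝ) x0)) = v0)
    (B : Matrix (Fin n) (Fin n) ℝ) (hB : B.IsSymm) (hBF : B ∉ Fc n (c - π/2))
    (L : (Fin n → ℝ) →ₗ[ℝ] ℝ) (η : ℝ) (hη : 0 < η)
    (ht : ∀ᶠ x in nhds x0, (⨅ t : I, u (Fin.cons (t : ℝ) x)) ≤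
      ((v0 + L (x - x0) + 1/2 * qf B (x - x0) - η * ‖x - x0‖^2 : ℝ) : EReal)) : False := by
  set U := {y : Fin (n+1) → ℝ | y 0 ∈ I ∧ Fin.tail y ∈ D} with hU
  have hUo : IsOpen U := isOpen_prod hIopen hDopen
  have hlt : liftedAngle B < c - π/2 := by
    by_contra hcon
    push Not at hcon
    exact hBF ⟨hB, hcon⟩
  obtain ⟨P, γ, hγ, hP, hsep, hPball⟩ := sepP (c - π/2) (by linarith) B ((isHermitian_iff_symm B).2 hB) hlt x0
    _ (ht.and (hDopen.mem_nhds hx0))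
  set Q := P⁻¹ with hQ
  have hQP : Q * P = 1 := Matrix.nonsing_inv_mul P hP
  have hPQ : P * Q = 1 := Matrix.mul_nonsing_inv P hP
  set φ : (Fin n → ℝ) → ℝ := fun x => v0 + L (x - x0) + 1/2 * qf B (x - x0) with hφ
  have hLc : Continuous L := L.continuous_of_finiteDimensional
  have hqc := qf_continuous B
  have hφc : Continuous φ := by
    rw [hφ]
    have h1 : Continuous fun x => L (x - x0) := hLc.comp (by fun_prop)
    have h2 : Continuous fun x => qf B (x - x0) := hqc.comp (by fun_prop)
    fun_prop
  set e : ℝ × (Fin n → ℝ) → (Fin (n+1) → ℝ) := fun q => Fin.cons q.1 (x0 + P *ᵥ q.2) with he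
  have hec : Continuous e :=
    cons_continuous.comp (by fun_prop : Continuous fun q : ℝ × (Fin n → ℝ) => (q.1, x0 + P *ᵥ q.2))
  set W' : Set (ℝ × (Fin n → ℝ)) := {q | e q ∈ U} with hW'
  have hW'o : IsOpen W' := hUo.preimage hec
  set W : Set (ℝ × (Fin n → ℝ)) := {q | e q ∈ U ∧ u (e q) < (φ (Fin.tail (e q)) : EReal)} with hW
  have hWo : IsOpen W := by
    rw [isOpen_iff_mem_nhds]
    rintro q ⟨hq1, hq2⟩
    have h1 := usc_lt_nhds hUo hu.2.1 (φ := fun y => φ (Fin.tail y)) hq1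
      (hφc.comp tail_continuous).continuousAt hq2
    have h0 : ∀ᶠ y in nhds (e q), y ∈ U := hUo.mem_nhds hq1
    exact hec.continuousAt.eventually (h0.and h1)
  have hmemU : ∀ t z, (e (t, z) ∈ U ↔ t ∈ I ∧ x0 + P *ᵥ z ∈ D) := by
    intro t z; simp [hU, he]
  obtain ⟨h, hh, hhW⟩ := harmonic_selection hn W hWo (by
      intro z hz
      have hD := (hPball z hz.le).2
      have := sublevel_convex n c hc I hIopen hIconv D hDopen u hu (x0 + P *ᵥ z) hD (φ (x0 + P *ᵥ z))
      convert this using 1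
      ext t
      simp only [hW, Set.mem_setOf_eq, hmemU]
      simp only [he, Fin.tail_cons]
      have hD' : x0 + P *ᵥ z ∈ D := hD
      tauto) (by
      intro z hz
      obtain ⟨h1, hD⟩ := hPball z hz.le
      have hD' : x0 + P *ᵥ z ∈ D := hD
      have hne : P *ᵥ z ≠ 0 := by
        intro h0
        have h2 : z = 0 := by
          have := congrArg (fun v => Q *ᵥ v) h0
          simpa [Matrix.mulVec_mulVec, hQP] using this
        rw [h2] at hz; simp at hz
      have h3 : (⨅ t : I, u (Fin.cons (t : ℝ) (x0 + P *ᵥ z))) < (φ (x0 + P *ᵥ z) : EReal) := by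
        refine lt_of_le_of_lt h1 (EReal.coe_lt_coe_iff.2 ?_)
        have : 0 < ‖P *ᵥ z‖ := norm_pos_iff.2 hne
        have : 0 < η * ‖x0 + P *ᵥ z - x0‖^2 := by rw [add_sub_cancel_left]; positivity
        simp only [hφ]; linarith
      obtain ⟨t, ht⟩ := iInf_lt_iff.1 h3
      refine ⟨t, (hmemU _ _).2 ⟨t.2, hD'⟩, ?_⟩
      simpa [he] using ht)
  have hhc := poly_continuous h
  -- the harmonic extension stays in I
  have hsne : ({z : Fin n → ℝ | ∑ j, z j ^ 2 = 1}).Nonempty := by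
    refine ⟨Pi.single ⟨0, hn⟩ 1, ?_⟩
    simp [Pi.single_apply]
  obtain ⟨za, hza, hmaxa⟩ := (isCompact_sphere' n).exists_isMaxOn hsne hhc.continuousOn
  obtain ⟨zb, hzb, hminb⟩ := (isCompact_sphere' n).exists_isMinOn hsne hhc.continuousOn
  have hhI : ∀ z : Fin n → ℝ, ∑ j, z j ^ 2 ≤ 1 → eval z h ∈ I := by
    intro z hz
    have h1 : eval z h ≤ eval za h := max_principle hn h hh _ (fun y hy => hmaxa hy) z hz
    have h2 : eval zb h ≤ eval z h := by
      have := max_principle hn ((-1:ℝ) • h) (by rw [lapl_smul, hh, smul_zero]) (-eval zb h) (fun y hy => by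
        rw [smul_eval]
        have : eval zb h ≤ eval y h := hminb hy
        linarith) z hz
      rw [smul_eval] at this; linarith
    have ia : eval za h ∈ I := (((hmemU _ _).1 (hhW za hza).1)).1
    have ib : eval zb h ∈ I := (((hmemU _ _).1 (hhW zb hzb).1)).1
    exact hIconv.ordConnected.out ib ia ⟨h2, h1⟩
  -- tube
  have hgc : Continuous fun z : Fin n → ℝ => (eval z h, z) := by fun_prop
  obtain ⟨δ1, hδ1, hth1⟩ := ((isCompact_sphere' n).image hgc).exists_thickening_subset_open hWo (by
    rintro _ ⟨z, hz, rfl⟩; exact hhW z hz)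
  obtain ⟨δ2, hδ2, hth2⟩ := ((isCompact_ball' n).image hgc).exists_thickening_subset_open hW'o (by
    rintro _ ⟨z, hz, rfl⟩; exact (hmemU _ _).2 ⟨hhI z hz, (hPball z hz).2⟩)
  set ρ := min δ1 δ2 / 2 with hρ
  have hδm : 0 < min δ1 δ2 := lt_min hδ1 hδ2
  have hρ0 : 0 < ρ := by positivity
  have hρ1 : ρ < δ1 := by have := min_le_left δ1 δ2; linarith
  have hρ2 : ρ < δ2 := by have := min_le_right δ1 δ2; linarith
  have htube1 : ∀ t z, ∑ j, z j ^ 2 = 1 → |t - eval z h| ≤ ρ → (t, z) ∈ W := by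
    intro t z hz htz
    apply hth1
    rw [Metric.mem_thickening_iff]
    refine ⟨_, ⟨z, hz, rfl⟩, ?_⟩
    rw [Prod.dist_eq, dist_self, max_lt_iff]
    exact ⟨lt_of_le_of_lt htz hρ1, hδ1⟩
  have htube2 : ∀ t z, ∑ j, z j ^ 2 ≤ 1 → |t - eval z h| ≤ ρ → (t, z) ∈ W' := by
    intro t z hz htz
    apply hth2
    rw [Metric.mem_thickening_iff]
    refine ⟨_, ⟨z, hz, rfl⟩, ?_⟩
    rw [Prod.dist_eq, dist_self, max_lt_iff]
    exact ⟨lt_of_le_of_lt htz hρ2, hδ2⟩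
  set Z : (Fin (n+1) → ℝ) → (Fin n → ℝ) := fun y => Q *ᵥ (Fin.tail y - x0) with hZ
  have hZc : Continuous Z := by
    have : Continuous fun y : Fin (n+1) → ℝ => (Fin.tail y - x0 : Fin n → ℝ) := tail_continuous.sub continuous_const
    rw [hZ]; fun_prop
  have heZ : ∀ y, e (y 0, Z y) = y := by
    intro y
    simp only [he, hZ, Matrix.mulVec_mulVec, hPQ, Matrix.one_mulVec, add_sub_cancel]
    exact Fin.cons_self_tail y
  have hZe : ∀ t z, Z (e (t, z)) = z := by
    intro t z
    simp only [he, hZ, Fin.tail_cons, add_sub_cancel_left, Matrix.mulVec_mulVec, hQP, Matrix.one_mulVec]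
  set K : Set (Fin (n+1) → ℝ) := {y | ∑ j, Z y j ^ 2 ≤ 1 ∧ |y 0 - eval (Z y) h| ≤ ρ} with hK
  have hKc : IsCompact K := by
    have hc2 : Continuous fun q : ℝ × (Fin n → ℝ) => e (eval q.2 h + q.1, q.2) := by
      apply hec.comp
      have : Continuous fun q : ℝ × (Fin n → ℝ) => eval q.2 h := hhc.comp continuous_snd
      fun_prop
    have : K = (fun q : ℝ × (Fin n → ℝ) => e (eval q.2 h + q.1, q.2)) ''
        (Set.Icc (-ρ) ρ ×ˢ {z : Fin n → ℝ | ∑ j, z j ^ 2 ≤ 1}) := by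
      ext y; constructor
      · rintro ⟨h1, h2⟩
        refine ⟨(y 0 - eval (Z y) h, Z y), ⟨abs_le.1 h2, h1⟩, ?_⟩
        simp only [add_sub_cancel]
        exact heZ y
      · rintro ⟨⟨s, z⟩, ⟨h1, h2⟩, rfl⟩
        simp only [hK, Set.mem_setOf_eq, hZe]
        refine ⟨h2, ?_⟩
        simp only [he, Fin.cons_zero, add_sub_cancel_left]
        exact abs_le.2 h1
    rw [this]
    exact (isCompact_Icc.prod (isCompact_ball' n)).image hc2
  have hKU : K ⊆ U := by
    intro y hy
    have := htube2 (y 0) (Z y) hy.1 hy.2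
    simpa [hW', heZ] using this
  obtain ⟨M, hM0, hM⟩ := usc_bdd hu.2.1 hu.1 hKc hKU
  have hφtc : Continuous fun y : Fin (n+1) → ℝ => φ (Fin.tail y) := hφc.comp tail_continuous
  obtain ⟨M', hM'⟩ := (hKc.image hφtc).isBounded.exists_norm_le
  have hM'' : ∀ y ∈ K, |φ (Fin.tail y)| ≤ M' := fun y hy => hM' _ ⟨y, hy, rfl⟩
  -- base point
  set yc : Fin (n+1) → ℝ := e (eval (0 : Fin n → ℝ) h, 0) with hyc
  have hycK : yc ∈ K := by
    simp only [hK, Set.mem_setOf_eq, hyc, hZe]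
    simp [he, hρ0.le]
  have hM'0 : 0 ≤ M' := (abs_nonneg _).trans (hM'' yc hycK)
  set N := 2 * (M + M' + 1) / ρ^2 with hN
  have hN0 : 0 < N := by positivity
  have hNρ : N / 2 * ρ^2 = M + M' + 1 := by rw [hN]; field_simp
  set g : (Fin (n+1) → ℝ) → ℝ := fun y => φ (Fin.tail y) + N/2 * (y 0 - eval (Z y) h)^2 with hg
  have hgc : Continuous g := by
    have : Continuous fun y => eval (Z y) h := hhc.comp hZc
    rw [hg]; fun_prop
  have hGusc : UpperSemicontinuousOn (fun y => u y + ((-g y : ℝ) : EReal)) K := by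
    apply UpperSemicontinuousOn.add' (hu.2.1.mono hKU)
    · exact (continuous_coe_real_ereal.comp hgc.neg).continuousOn.upperSemicontinuousOn
    · intro y hy
      exact EReal.continuousAt_add (Or.inr (EReal.coe_ne_bot _)) (Or.inr (EReal.coe_ne_top _))
  obtain ⟨y1, hy1, hmax⟩ := hGusc.exists_isMaxOn ⟨yc, hycK⟩ hKc
  have hmax' : ∀ y ∈ K, u y + ((-g y : ℝ) : EReal) ≤ u y1 + ((-g y1 : ℝ) : EReal) := fun y hy => hmax hy
  have hycv : (v0 : EReal) ≤ u yc := by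
    rw [← hv0]
    have : yc = Fin.cons (eval (0 : Fin n → ℝ) h) x0 := by simp [hyc, he]
    rw [this]
    exact iInf_le (fun t : I => u (Fin.cons (t : ℝ) x0)) ⟨eval 0 h, hhI 0 (by simp)⟩
  have hgyc : g yc = v0 := by
    simp only [hg, hyc, hZe]
    simp [he, hφ, qf]
  have hge : (0 : EReal) ≤ u y1 + ((-g y1 : ℝ) : EReal) := by
    refine le_trans ?_ (hmax' yc hycK)
    rw [hgyc]
    calc (0:EReal) = (v0 : EReal) + ((-v0 : ℝ) : EReal) := by rw [← EReal.coe_add]; simp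
      _ ≤ _ := by gcongr
  have hy1v : ∃ r : ℝ, u y1 = r := by
    induction hvx : u y1 using EReal.rec with
    | bot => rw [hvx, EReal.bot_add, le_bot_iff] at hge; exact absurd hge (EReal.coe_ne_bot 0)
    | top => exact absurd hvx (hu.1 y1 (hKU hy1))
    | coe r => exact ⟨r, rfl⟩
  obtain ⟨u1, hu1⟩ := hy1v
  have hge' : g y1 ≤ u1 := by
    rw [hu1, ← EReal.coe_add, ← EReal.coe_zero, EReal.coe_le_coe_iff] at hge
    linarith
  have hi1 : ∑ j, Z y1 j ^ 2 < 1 := by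
    refine lt_of_le_of_ne hy1.1 fun heq => ?_
    have := htube1 (y1 0) (Z y1) heq hy1.2
    have h2 := this.2
    rw [heZ, hu1, EReal.coe_lt_coe_iff] at h2
    have h3 : 0 ≤ N/2 * (y1 0 - eval (Z y1) h)^2 := by positivity
    simp only [hg] at hge'
    linarith
  have hi2 : |y1 0 - eval (Z y1) h| < ρ := by
    refine lt_of_le_of_ne hy1.2 fun heq => ?_
    have h2 := hM y1 hy1
    rw [hu1, EReal.coe_le_coe_iff] at h2
    have h3 := neg_le_of_abs_le (hM'' y1 hy1)
    simp only [hg] at hge'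
    rw [← sq_abs, heq, hNρ] at hge'
    linarith
  have hKn : ∀ᶠ y in nhds y1, y ∈ K := by
    have c1 : Continuous fun y => ∑ j, Z y j ^ 2 := by fun_prop
    have c2 : Continuous fun y => |y 0 - eval (Z y) h| := by
      have : Continuous fun y => eval (Z y) h := hhc.comp hZc
      fun_prop
    filter_upwards [(c1.tendsto y1).eventually_lt_const hi1, (c2.tendsto y1).eventually_lt_const hi2] with y a b
    exact ⟨a.le, b.le⟩
  refine no_interior_max n c U hUo u hu B P hB hP γ hγ hsep h hh x0 L N hN0 y1 (hKU hy1) u1 hu1 ?_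
  filter_upwards [hKn] with y hy
  have := hmax' y hy
  rw [hu1, ← EReal.coe_add, ereal_add_le] at this
  refine this.trans (EReal.coe_le_coe_iff.2 (le_of_eq ?_))
  simp only [hg, hφ, hZ]
  ring

end

/-- **Minimum principle for Lagrangian graphs** (Darvas–Rubinstein).
Let `D ⊂ ℝⁿ` be a bounded domain, `I ⊂ ℝ` an open interval, and
`c ∈ [nπ/2, (n+1)π/2)`.  If `u ∈ ℱ_c(I × D)` then the function
`v(x) := inf_{t ∈ I} u(t,x)` belongs to `F_{c - π/2}(D)` (as an `EReal`-valued
function; in particular the constant `−∞` function is of type `F_{c-π/2}` by convention). -/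
theorem minimum_principle (n : ℕ) (c : ℝ)
    (hc : (n : ℝ) * π / 2 ≤ c) (hc' : c < ((n : ℝ) + 1) * π / 2)
    (I : Set ℝ) (hIopen : IsOpen I) (hIconv : Convex ℝ I) (hIne : I.Nonempty)
    (D : Set (Fin n → ℝ)) (hDopen : IsOpen D) (hDconn : IsConnected D)
    (hDbdd : Bornology.IsBounded D)
    (u : (Fin (n+1) → ℝ) → EReal)
    (hu : IsTypeF (calF n c) {y | y 0 ∈ I ∧ Fin.tail y ∈ D} u) :
    IsTypeF (Fc n (c - π / 2)) D (fun x => ⨅ t : I, u (Fin.cons (t : ℝ) x)) := by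
  have hUo : IsOpen {y : Fin (n+1) → ℝ | y 0 ∈ I ∧ Fin.tail y ∈ D} := isOpen_prod hIopen hDopen
  have htop : ∀ x ∈ D, (⨅ t : I, u (Fin.cons (t : ℝ) x)) ≠ ⊤ := by
    intro x hx
    obtain ⟨t, ht⟩ := hIne
    have h1 : (⨅ t : I, u (Fin.cons (t : ℝ) x)) ≤ u (Fin.cons t x) :=
      iInf_le (fun t : I => u (Fin.cons (t : ℝ) x)) ⟨t, ht⟩
    exact ne_top_of_le_ne_top (hu.1 _ ⟨by simpa using ht, by simpa using hx⟩) h1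
  have husc : UpperSemicontinuousOn (fun x => ⨅ t : I, u (Fin.cons (t : ℝ) x)) D := by
    apply upperSemicontinuousOn_iInf
    intro t x hx y hy
    have hmem : (Fin.cons (t : ℝ) x : Fin (n+1) → ℝ) ∈ {y : Fin (n+1) → ℝ | y 0 ∈ I ∧ Fin.tail y ∈ D} :=
      ⟨by simp, by simpa using hx⟩
    have h1 := hu.2.1 _ hmem y hy
    rw [hUo.nhdsWithin_eq hmem] at h1
    have hc1 : Continuous fun x : Fin n → ℝ => (Fin.cons (t : ℝ) x : Fin (n+1) → ℝ) :=
      cons_continuous.comp (by fun_prop : Continuous fun x : Fin n → ℝ => ((t : ℝ), x))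
    exact (hc1.continuousAt.eventually h1).filter_mono nhdsWithin_le_nhds
  rcases Nat.eq_zero_or_pos n with rfl | hn
  · refine ⟨htop, husc, fun w _ hw => ?_⟩
    exfalso
    obtain ⟨x, hx⟩ := hDconn.nonempty
    apply (hw x hx).2
    refine ⟨Subsingleton.elim _ _, Eventually.of_forall fun B hB => ⟨hB, ?_⟩⟩
    have : liftedAngle B = 0 := by
      unfold liftedAngle; split_ifs <;> simp
    rw [this]
    simp at hc'
    linarith
  · exact typeF_of_no_touch hDopen htop husc fun x0 hx0 v0 hv0 B hB hBF L η hη ht =>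
      main_no_touch n hn c hc I hIopen hIconv D hDopen u hu x0 hx0 v0 hv0 B hB hBF L η hη ht
end

section
/- Let I ⊂ ℝ be an open interval, D ⊂ ℝⁿ a domain, and f ∈ C²(I × D) with ∂²f/∂t²(t, x) > 0 for all (t, x) ∈ I × D. Suppose that for each x ∈ D the function t ↦ f(t, x) attains its infimum over I at a (necessarily unique) point t(x) ∈ I, and set g(x) := f(t(x), x). Then for all x ∈ D: θ̃(∇²g(x)) = Θ̃(∇²f(t(x), x)) − π/2, where ∇²f denotes the full (n+1)×(n+1) Hessian of f in the variables (t, x) and ∇²g the n×n Hessian of g. -/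
open Real Filter Matrix

open Polynomial in
lemma det_affine {N : ℕ} (M : Matrix (Fin N) (Fin N) ℂ) (c r : ℂ) :
    (c • (1 : Matrix (Fin N) (Fin N) ℂ) + r • M).det =
      (M.charpoly.roots.map (fun z => c + r * z)).prod := by
  have hs : M.charpoly.Splits := IsAlgClosed.splits _
  have hcard : M.charpoly.roots.card = N := by
    rw [← hs.natDegree_eq_card_roots]; simp [Matrix.charpoly_natDegree_eq_dim]
  have hev : ∀ z, (Matrix.scalar (Fin N) z - M).det =
      (M.charpoly.roots.map (fun w => z - w)).prod := by
    intro z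
    rw [← Matrix.eval_charpoly]
    conv_lhs => rw [hs.eq_prod_roots_of_monic (Matrix.charpoly_monic M)]
    rw [Polynomial.eval_multiset_prod, Multiset.map_map]
    simp
  by_cases hr : r = 0
  · subst hr
    simp [hcard]
  · have : c • (1 : Matrix (Fin N) (Fin N) ℂ) + r • M =
        (-r) • (Matrix.scalar (Fin N) (-c / r) - M) := by
      ext i j
      by_cases hij : i = j <;> simp [hij] <;> field_simp <;> ring
    rw [this, Matrix.det_smul, hev, Fintype.card_fin]
    have hp : (-r) ^ N = (-r) ^ M.charpoly.roots.card := by rw [hcard]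
    rw [hp, ← Multiset.prod_replicate, ← Multiset.map_const', ← Multiset.prod_map_mul]
    congr 1
    apply Multiset.map_congr rfl
    intro w _
    field_simp
    ring

lemma isLocalHomeomorph_cexp : IsLocalHomeomorph Complex.exp := fun x =>
  ⟨_, ((Complex.hasStrictDerivAt_exp x).hasStrictFDerivAt_equiv
      (Complex.exp_ne_zero x)).mem_toOpenPartialHomeomorph_source, by simp⟩

lemma slit_aux (z : ℂ) (h : 0 ≤ z.re) (h0 : z ≠ 0) (r : unitInterval) :
    (1 - ((r : ℝ) : ℂ)) + ((r : ℝ) : ℂ) * z ∈ Complex.slitPlane := by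
  have hr0 := r.2.1
  have hr1 := r.2.2
  rw [Complex.mem_slitPlane_iff]
  simp
  by_cases h1 : (r : ℝ) = 1
  · rw [h1]
    by_cases hz : z.re = 0
    · right
      refine ⟨by rintro rfl; simp at h1, fun him => ?_⟩
      exact h0 (Complex.ext hz him)
    · left
      have := lt_of_le_of_ne h (Ne.symm hz)
      simpa
  · left
    have : (r : ℝ) < 1 := lt_of_le_of_ne hr1 h1
    have := mul_nonneg hr0 h
    linarith

lemma sum_log_const {N : ℕ} (M : unitInterval → Matrix (Fin N) (Fin N) ℂ)
    (hM : Continuous M)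
    (hre : ∀ s, ∀ z ∈ (M s).charpoly.roots, 0 ≤ z.re ∧ z ≠ 0)
    (hdet : ∀ s, (M s).det = (M 0).det) :
    (((M 0).charpoly.roots).map Complex.log).sum =
      (((M 1).charpoly.roots).map Complex.log).sum := by
  let F : C(unitInterval × unitInterval, ℂ) :=
    ⟨fun p => ((1 - ((p.1 : ℝ) : ℂ)) • (1 : Matrix (Fin N) (Fin N) ℂ) +
      ((p.1 : ℝ) : ℂ) • M p.2).det, by
        apply Continuous.matrix_det
        fun_prop⟩
  let L : unitInterval × unitInterval → ℂ := fun p =>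
    ((M p.2).charpoly.roots.map
      (fun z => Complex.log ((1 - ((p.1 : ℝ) : ℂ)) + ((p.1 : ℝ) : ℂ) * z))).sum
  have sep : IsSeparatedMap Complex.exp := T2Space.isSeparatedMap _
  have hlift : Complex.exp ∘ L = F := by
    funext p
    simp only [Function.comp, L, F, ContinuousMap.coe_mk]
    rw [Complex.exp_multiset_sum, Multiset.map_map, det_affine]
    congr 1
    apply Multiset.map_congr rfl
    intro z hz
    obtain ⟨h1, h2⟩ := hre p.2 z hz
    exact Complex.exp_log (Complex.slitPlane_ne_zero (slit_aux z h1 h2 p.1))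
  have hc : Continuous L := by
    apply isLocalHomeomorph_cexp.continuous_lift sep F hlift
    · simp [L]
      exact continuous_const
    · intro a
      simp only [L]
      apply continuous_multiset_sum
      intro z hz
      obtain ⟨h1, h2⟩ := hre a z hz
      apply Continuous.clog
      · fun_prop
      · intro r
        exact slit_aux z h1 h2 r
  have h1 : ∀ s, L (1, s) = ((M s).charpoly.roots.map Complex.log).sum := by
    intro s; simp [L]
  rw [← h1, ← h1]
  refine sep.const_of_comp isLocalHomeomorph_cexp.isLocallyInjective
    (g := fun s : unitInterval => L (1, s)) (by fun_prop) ?_ 0 1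
  intro a b
  have h2 : ∀ s, Complex.exp (L (1, s)) = (M 0).det := by
    intro s
    have := congrFun hlift (1, s)
    simp only [Function.comp] at this
    rw [this]
    simp [F, hdet s]
  rw [h2, h2]

open ComplexOrder in
lemma root_re {n : ℕ} (A : Matrix (Fin (n+1)) (Fin (n+1)) ℝ) (hA : A.IsSymm)
    (hdet : (cmat A).det ≠ 0) :
    ∀ z ∈ (cmat A).charpoly.roots, 0 ≤ z.re ∧ z ≠ 0 := by
  intro z hz
  have hz0 : (Matrix.scalar (Fin (n+1)) z - cmat A).det = 0 := by
    rw [← Matrix.eval_charpoly]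
    exact (Polynomial.mem_roots'.1 hz).2
  refine ⟨?_, ?_⟩
  · obtain ⟨v, hv0, hv⟩ := Matrix.exists_mulVec_eq_zero_iff.2 hz0
    have hMv : cmat A *ᵥ v = z • v := by
      rw [Matrix.sub_mulVec, sub_eq_zero] at hv
      rw [← hv]
      ext i
      simp
    have key : star v ⬝ᵥ (cmat A *ᵥ v) = z * (star v ⬝ᵥ v) := by
      rw [hMv]; simp
    have hAc : (A.map (fun a => (a : ℂ))).IsHermitian := by
      ext i j
      simp [Matrix.conjTranspose_apply, hA.apply]
    have him := hAc.im_star_dotProduct_mulVec_self v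
    unfold cmat at key
    rw [Matrix.add_mulVec, dotProduct_add, Matrix.smul_mulVec, dotProduct_smul] at key
    have hpos : 0 < (star v ⬝ᵥ v).re ∧ (star v ⬝ᵥ v).im = 0 := by
      have := (Matrix.dotProduct_star_self_pos_iff (v := v)).2 hv0
      have h2 := Complex.lt_def.1 this
      simp only [Complex.zero_re, Complex.zero_im] at h2
      exact ⟨h2.1, h2.2.symm⟩
    have hI : 0 ≤ (star v ⬝ᵥ (Inmat n *ᵥ v)).re := by
      unfold Inmat
      simp only [dotProduct, Matrix.mulVec_diagonal, Complex.re_sum]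
      apply Finset.sum_nonneg
      intro i _
      by_cases hi : i = 0
      · simp [hi]
      · simp [hi]
        nlinarith [mul_self_nonneg (v i).re, mul_self_nonneg (v i).im]
    have hre := congrArg Complex.re key
    simp [hpos.2] at hre him
    rw [him] at hre
    by_contra hneg
    push Not at hneg
    nlinarith [hpos.1]
  · rintro rfl
    apply hdet
    have : Matrix.scalar (Fin (n+1)) (0:ℂ) - cmat A = - cmat A := by simp
    rw [this, Matrix.det_neg] at hz0
    simpa using hz0

open Polynomial in
lemma charpoly_of_col_zero {n : ℕ} (M : Matrix (Fin (n+1)) (Fin (n+1)) ℂ)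
    (h : ∀ i : Fin n, M i.succ 0 = 0) :
    M.charpoly = (X - C (M 0 0)) * (M.submatrix Fin.succ Fin.succ).charpoly := by
  rw [Matrix.charpoly, Matrix.det_succ_column_zero, Fin.sum_univ_succ]
  have : (M.charmatrix.submatrix (Fin.succAbove 0) Fin.succ) =
      (M.submatrix Fin.succ Fin.succ).charmatrix := by
    ext i j : 2
    by_cases hij : i = j
    · subst hij; simp [Matrix.charmatrix_apply]
    · simp [Matrix.charmatrix_apply, hij]
  rw [this]
  simp [Matrix.charmatrix_apply, h, Matrix.charpoly, Fin.succ_ne_zero]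

open Polynomial in
lemma charpoly_one_add {n : ℕ} (B : Matrix (Fin n) (Fin n) ℝ) (hB : B.IsHermitian) :
    (1 + Complex.I • B.map (fun a => (a : ℂ))).charpoly =
      ∏ j, (X - C (1 + Complex.I * (hB.eigenvalues j : ℂ))) := by
  apply Polynomial.funext
  intro z
  rw [Matrix.eval_charpoly, Polynomial.eval_prod]
  have h1 : Matrix.scalar (Fin n) z - (1 + Complex.I • B.map (fun a => (a : ℂ))) =
      Complex.I • (Matrix.scalar (Fin n) (-Complex.I * (z - 1)) - B.map (fun a => (a : ℂ))) := by
    ext i j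
    by_cases hij : i = j
    · subst hij
      simp
      linear_combination ((z - 1)) * Complex.I_mul_I
    · simp [hij]
  have h2 : (B.map (fun a => (a : ℂ))).charpoly = ∏ j, (X - C ((hB.eigenvalues j : ℝ) : ℂ)) := by
    have := Matrix.charpoly_map B Complex.ofRealHom
    rw [hB.charpoly_eq] at this
    simp only [Polynomial.map_prod, Polynomial.map_sub, Polynomial.map_X, Polynomial.map_C] at this
    exact this
  rw [h1, Matrix.det_smul, ← Matrix.eval_charpoly, h2, Polynomial.eval_prod, Fintype.card_fin]
  have : Complex.I ^ n = ∏ j : Fin n, Complex.I := by simp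
  rw [this, ← Finset.prod_mul_distrib]
  apply Finset.prod_congr rfl
  intro j _
  simp
  linear_combination (-(z - 1)) * Complex.I_mul_I

lemma arg_one_add (x : ℝ) : (1 + Complex.I * (x : ℂ)).arg = Real.arctan x := by
  rw [Complex.arg_of_re_nonneg (by simp), Real.arctan_eq_arcsin]
  congr 1
  have : ‖(1 + Complex.I * (x : ℂ))‖ = √(1 + x ^ 2) := by
    rw [Complex.norm_def, Complex.normSq_apply]
    simp
    ring_nf
  rw [this]
  simp

/-- The unipotent matrices of the homotopy. -/
noncomputable def Emat {n : ℕ} (A : Matrix (Fin (n+1)) (Fin (n+1)) ℝ) (s : ℝ) :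
    Matrix (Fin (n+1)) (Fin (n+1)) ℝ :=
  1 - s • Matrix.of fun i j => if j = 0 ∧ i ≠ 0 then A i 0 / A 0 0 else 0

lemma Emat_det {n : ℕ} (A : Matrix (Fin (n+1)) (Fin (n+1)) ℝ) (s : ℝ) :
    (Emat A s).det = 1 := by
  rw [Matrix.det_of_isLowerTriangular]
  · apply Finset.prod_eq_one
    intro i _
    simp [Emat]
  · intro i j hij
    have hij' : i < j := hij
    have h1 : i ≠ j := hij'.ne
    have h2 : j ≠ 0 := by
      rintro rfl
      exact absurd hij' (by simp)
    simp [Emat, h1, h2]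

lemma Emat_mul_zero {n : ℕ} (A B : Matrix (Fin (n+1)) (Fin (n+1)) ℝ) (s : ℝ) (j) :
    (Emat A s * B) 0 j = B 0 j := by
  rw [Emat, Matrix.sub_mul, Matrix.one_mul, Matrix.sub_apply]
  simp [Matrix.mul_apply]

lemma Emat_mul_succ {n : ℕ} (A B : Matrix (Fin (n+1)) (Fin (n+1)) ℝ) (s : ℝ) (i : Fin n) (j) :
    (Emat A s * B) i.succ j = B i.succ j - s * (A i.succ 0 / A 0 0) * B 0 j := by
  rw [Emat, Matrix.sub_mul, Matrix.one_mul, Matrix.sub_apply]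
  simp [Matrix.mul_apply]

lemma cmat_congr {n : ℕ} (A B : Matrix (Fin (n+1)) (Fin (n+1)) ℝ) (s : ℝ) :
    cmat (Emat A s * B * (Emat A s)ᵀ) =
      (Emat A s).map (fun a => (a : ℂ)) * cmat B * ((Emat A s)ᵀ).map (fun a => (a : ℂ)) := by
  have hmap : ∀ P Q : Matrix (Fin (n+1)) (Fin (n+1)) ℝ,
      (P * Q).map (fun a => (a : ℂ)) = P.map (fun a => (a : ℂ)) * Q.map (fun a => (a : ℂ)) := by
    intro P Q
    exact Matrix.map_mul (f := Complex.ofRealHom)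
  have h1 : (Emat A s).map (fun a => (a : ℂ)) * Inmat n = Inmat n := by
    ext i j
    by_cases hj : j = 0
    · simp [Inmat, hj, Matrix.mul_diagonal, Matrix.diagonal_apply]
    · simp [Inmat, hj, Matrix.mul_diagonal, Matrix.diagonal_apply, Emat, Matrix.one_apply]
      by_cases hij : i = j
      · subst hij; simp [hj]
      · simp [hij]
  have h2 : Inmat n * ((Emat A s)ᵀ).map (fun a => (a : ℂ)) = Inmat n := by
    have := congrArg Matrix.transpose h1
    rw [Matrix.transpose_mul] at this
    rw [Inmat, Matrix.diagonal_transpose] at this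
    exact this
  unfold cmat
  rw [Matrix.mul_add, Matrix.add_mul, h1, h2, hmap, hmap]
  simp

lemma angle_schur {n : ℕ} (A : Matrix (Fin (n+1)) (Fin (n+1)) ℝ) (hA : A.IsSymm)
    (ha : 0 < A 0 0) (B : Matrix (Fin n) (Fin n) ℝ)
    (hB : ∀ i j, B i j = A i.succ j.succ - A i.succ 0 * A 0 j.succ / A 0 0) :
    liftedAngle B = spaceTimeAngle A - π / 2 := by
  have hBs : B.IsHermitian := by
    ext i j
    rw [Matrix.conjTranspose_apply, hB, hB]
    rw [hA.apply, hA.apply i.succ 0, ← hA.apply 0 j.succ]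
    simp
    ring
  let P : ℝ → Matrix (Fin (n+1)) (Fin (n+1)) ℝ := fun s => Emat A s * A * (Emat A s)ᵀ
  have hPs : ∀ s, (P s).IsSymm := by
    intro s
    simp only [P, Matrix.IsSymm, Matrix.transpose_mul, Matrix.transpose_transpose, hA.eq,
      Matrix.mul_assoc]
  have hP0 : P 0 = A := by simp [P, Emat]
  have hPdet : ∀ s, (cmat (P s)).det = (cmat A).det := by
    intro s
    simp only [P]
    have e1 : ((Emat A s).map (fun a => (a : ℂ))).det = 1 := by
      have := (Complex.ofRealHom.map_det (Emat A s)).symm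
      rw [Emat_det, map_one] at this
      exact this
    have e2 : (((Emat A s)ᵀ).map (fun a => (a : ℂ))).det = 1 := by
      have := Matrix.det_transpose ((Emat A s).map (fun a => (a : ℂ)))
      rw [e1] at this
      exact this
    rw [cmat_congr, Matrix.det_mul, Matrix.det_mul, e1, e2]
    simp
  have hrow : ∀ s i, (P s) i 0 = (Emat A s * A) i 0 := by
    intro s i
    simp only [P]
    rw [← Matrix.transpose_apply (Emat A s * A * (Emat A s)ᵀ), Matrix.transpose_mul,
      Matrix.transpose_transpose, Emat_mul_zero, Matrix.transpose_apply]
  have hcol : ∀ s i (j : Fin n), (P s) i j.succ =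
      (Emat A s * A) i j.succ - s * (A j.succ 0 / A 0 0) * (Emat A s * A) i 0 := by
    intro s i j
    simp only [P]
    rw [← Matrix.transpose_apply (Emat A s * A * (Emat A s)ᵀ), Matrix.transpose_mul,
      Matrix.transpose_transpose, Emat_mul_succ, Matrix.transpose_apply, Matrix.transpose_apply]
  have hP00 : P 1 0 0 = A 0 0 := by rw [hrow, Emat_mul_zero]
  have hPi0 : ∀ i : Fin n, P 1 i.succ 0 = 0 := by
    intro i
    rw [hrow, Emat_mul_succ]
    field_simp
    ring
  have hPij : ∀ i j : Fin n, P 1 i.succ j.succ = B i j := by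
    intro i j
    rw [hcol, Emat_mul_succ, Emat_mul_succ, hB]
    field_simp
    ring
  have hch : (cmat (P 1)).charpoly = (Polynomial.X - Polynomial.C (Complex.I * (A 0 0 : ℂ))) *
      ∏ j, (Polynomial.X - Polynomial.C (1 + Complex.I * (hBs.eigenvalues j : ℂ))) := by
    rw [charpoly_of_col_zero, ← charpoly_one_add]
    · congr 3
      · simp [cmat, Inmat, hP00]
      · ext i j
        by_cases hij : i = j
        · subst hij
          simp [cmat, Inmat, hPij, Fin.succ_ne_zero]
        · simp [cmat, Inmat, hPij, Fin.succ_ne_zero, hij]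
    · intro i
      simp [cmat, Inmat, hPi0]
  have hroots : (cmat (P 1)).charpoly.roots = (Complex.I * (A 0 0 : ℂ)) ::ₘ
      (Finset.univ.val.map fun j => (1 + Complex.I * (hBs.eigenvalues j : ℂ))) := by
    have hmon : (∏ j, (Polynomial.X -
      Polynomial.C (1 + Complex.I * (hBs.eigenvalues j : ℂ)))).Monic :=
      Polynomial.monic_prod_of_monic _ _ fun j _ => Polynomial.monic_X_sub_C _
    rw [hch, Polynomial.roots_mul
      ((Polynomial.monic_X_sub_C _).mul hmon).ne_zero, Polynomial.roots_X_sub_C,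
      Polynomial.roots_prod _ _ hmon.ne_zero]
    simp only [Polynomial.roots_X_sub_C, Multiset.singleton_add, Multiset.bind_singleton]
  have hdet : (cmat A).det ≠ 0 := by
    rw [← hPdet 1, Matrix.det_eq_prod_roots_charpoly, hroots]
    simp only [Multiset.prod_cons, ne_eq, mul_eq_zero, not_or]
    refine ⟨⟨Complex.I_ne_zero, by exact_mod_cast ha.ne'⟩, ?_⟩
    intro h0
    rw [Multiset.prod_eq_zero_iff] at h0
    simp only [Multiset.mem_map] at h0
    obtain ⟨j, _, hj⟩ := h0
    have := congrArg Complex.re hj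
    simp at this
  have hmain := sum_log_const (fun s : unitInterval => cmat (P (s : ℝ))) (by
      have : Continuous fun s : unitInterval => Emat A (s : ℝ) := by
        unfold Emat; fun_prop
      have h2 : Continuous fun s : unitInterval => P (s : ℝ) := by
        simp only [P]
        fun_prop
      unfold cmat
      apply continuous_const.add
      exact Continuous.const_smul (h2.matrix_map Complex.continuous_ofReal) Complex.I)
    (fun s => root_re _ (hPs s) (by rw [hPdet]; exact hdet))
    (fun s => by simp only [hPdet])
  simp only [Set.Icc.coe_zero, Set.Icc.coe_one] at hmain
  rw [hP0] at hmain
  have him := congrArg Complex.im hmain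
  have hsum : ∀ m : Multiset ℂ, (m.map Complex.log).sum.im = (m.map Complex.arg).sum := by
    intro m
    have := map_multiset_sum Complex.imCLM (m.map Complex.log)
    simpa [Multiset.map_map, Function.comp_def, Complex.log_im] using this
  rw [hsum, hsum, hroots] at him
  rw [spaceTimeAngle, if_neg hdet, him, liftedAngle, dif_pos hBs]
  have hI : (Complex.I * (A 0 0 : ℂ)).arg = π / 2 := by
    rw [mul_comm, Complex.arg_real_mul _ ha, Complex.arg_I]
  rw [Multiset.map_cons, Multiset.sum_cons, hI, Multiset.map_map]
  simp only [Function.comp_def, arg_one_add]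
  simp [Finset.sum]

/-- The linear map `(x, t) ↦ (t, x)` into `ℝ^{n+1}`. -/
noncomputable def consL (n : ℕ) : ((Fin n → ℝ) × ℝ) →L[ℝ] (Fin (n+1) → ℝ) :=
  LinearMap.toContinuousLinearMap
    { toFun := fun p => (Fin.cons p.2 p.1 : Fin (n+1) → ℝ)
      map_add' := by
        intro p q
        funext i
        refine Fin.cases ?_ (fun j => ?_) i <;> simp
      map_smul' := by
        intro r p
        funext i
        refine Fin.cases ?_ (fun j => ?_) i <;> simp }

lemma consL_apply {n : ℕ} (x : Fin n → ℝ) (t : ℝ) :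
    consL n (x, t) = (Fin.cons t x : Fin (n+1) → ℝ) := rfl

lemma consL_zero_one {n : ℕ} : consL n (0, 1) = Pi.single 0 1 := by
  rw [consL_apply]
  funext i
  refine Fin.cases ?_ (fun j => ?_) i <;> simp

lemma consL_single {n : ℕ} (j : Fin n) : consL n (Pi.single j 1, 0) = Pi.single j.succ 1 := by
  rw [consL_apply]
  funext i
  refine Fin.cases ?_ (fun k => ?_) i
  · simp
  · simp [Pi.single_apply]

lemma hessianMatrix_apply {m : ℕ} (v : (Fin m → ℝ) → ℝ) (x : Fin m → ℝ) (i j : Fin m) :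
    hessianMatrix v x i j = fderiv ℝ (fderiv ℝ v) x (Pi.single i 1) (Pi.single j 1) := by
  simp [hessianMatrix, iteratedFDeriv_two_apply]

/-- Under the hypotheses of the minimum lemma, for all `x ∈ D`,
`θ̃(∇²g(x)) = Θ̃(∇²f(t(x),x)) − π/2`. -/
theorem angle_hessian_formula (n : ℕ)
    (I : Set ℝ) (hIopen : IsOpen I) (hIconv : Convex ℝ I) (hIne : I.Nonempty)
    (D : Set (Fin n → ℝ)) (hDopen : IsOpen D) (hDconn : IsConnected D)
    (f : (Fin (n+1) → ℝ) → ℝ)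
    (hf : ContDiffOn ℝ 2 f {y | y 0 ∈ I ∧ Fin.tail y ∈ D})
    (hftt : ∀ y ∈ {y : Fin (n+1) → ℝ | y 0 ∈ I ∧ Fin.tail y ∈ D},
      0 < hessianMatrix f y 0 0)
    (tfun : (Fin n → ℝ) → ℝ) (htI : ∀ x ∈ D, tfun x ∈ I)
    (hmin : ∀ x ∈ D, ∀ t ∈ I, f (Fin.cons (tfun x) x) ≤ f (Fin.cons t x))
    (g : (Fin n → ℝ) → ℝ) (hg : ∀ x, g x = f (Fin.cons (tfun x) x)) :
    ∀ x ∈ D,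
      liftedAngle (hessianMatrix g x) =
        spaceTimeAngle (hessianMatrix f (Fin.cons (tfun x) x)) - π / 2 := by
  have hΩopen : IsOpen {y : Fin (n+1) → ℝ | y 0 ∈ I ∧ Fin.tail y ∈ D} := by
    refine (hIopen.preimage (continuous_apply 0)).inter (hDopen.preimage ?_)
    exact continuous_pi fun i => continuous_apply i.succ
  have hmem : ∀ x ∈ D, ∀ t ∈ I,
      consL n (x, t) ∈ {y : Fin (n+1) → ℝ | y 0 ∈ I ∧ Fin.tail y ∈ D} := by
    intro x hx t ht
    exact ⟨by simpa [consL_apply] using ht, by simpa [consL_apply] using hx⟩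
  have hfat : ∀ x ∈ D, ∀ t ∈ I, ContDiffAt ℝ 2 f (consL n (x, t)) := fun x hx t ht =>
    hf.contDiffAt (hΩopen.mem_nhds (hmem x hx t ht))
  have hfd : ∀ x ∈ D, ∀ t ∈ I, DifferentiableAt ℝ f (consL n (x, t)) := fun x hx t ht =>
    (hfat x hx t ht).differentiableAt (by norm_num)
  have hf1 : ∀ x ∈ D, ∀ t ∈ I, ContDiffAt ℝ 1 (fderiv ℝ f) (consL n (x, t)) :=
    fun x hx t ht => (hfat x hx t ht).fderiv_right (by norm_num)
  have ha : ∀ x ∈ D, ∀ t ∈ I,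
      0 < fderiv ℝ (fderiv ℝ f) (consL n (x, t)) (consL n (0, 1)) (consL n (0, 1)) := by
    intro x hx t ht
    have := hftt _ (hmem x hx t ht)
    rwa [hessianMatrix_apply, ← consL_zero_one] at this
  -- the partial derivative in `t`
  have hG : ∀ x ∈ D, ∀ t ∈ I, HasStrictFDerivAt
      (fun p : (Fin n → ℝ) × ℝ => fderiv ℝ f (consL n p) (consL n (0, 1)))
      (((fderiv ℝ (fderiv ℝ f) (consL n (x, t))).flip (consL n (0, 1))) ∘L consL n) (x, t) := by
    intro x hx t ht
    have h1 : HasStrictFDerivAt (fderiv ℝ f) (fderiv ℝ (fderiv ℝ f) (consL n (x, t)))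
      (consL n (x, t)) := (hf1 x hx t ht).hasStrictFDerivAt (by norm_num)
    have h2 := h1.comp (x, t) (consL n).hasStrictFDerivAt
    exact ((ContinuousLinearMap.apply ℝ ℝ (consL n (0, 1))).hasStrictFDerivAt).comp (x, t) h2
  have hline : ∀ (x : Fin n → ℝ) (t : ℝ), HasDerivAt (fun τ : ℝ => (x, τ))
      ((0 : Fin n → ℝ), (1 : ℝ)) t := fun x t => (hasDerivAt_const t x).prodMk (hasDerivAt_id t)
  have hGt : ∀ x ∈ D, ∀ t ∈ I, HasDerivAt
      (fun τ : ℝ => fderiv ℝ f (consL n (x, τ)) (consL n (0, 1)))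
      (fderiv ℝ (fderiv ℝ f) (consL n (x, t)) (consL n (0, 1)) (consL n (0, 1))) t := by
    intro x hx t ht
    exact (hG x hx t ht).hasFDerivAt.comp_hasDerivAt t (hline x t)
  have hzero : ∀ x ∈ D, fderiv ℝ f (consL n (x, tfun x)) (consL n (0, 1)) = 0 := by
    intro x hx
    have h1 : HasDerivAt (fun τ : ℝ => f (consL n (x, τ)))
        (fderiv ℝ f (consL n (x, tfun x)) (consL n (0, 1))) (tfun x) := by
      have h2 : HasFDerivAt (fun p => f (consL n p)) _ (x, tfun x) :=
        (hfd x hx _ (htI x hx)).hasFDerivAt.comp (x, tfun x) (consL n).hasFDerivAt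
      exact h2.comp_hasDerivAt (tfun x) (hline x (tfun x))
    have h3 : IsLocalMin (fun τ : ℝ => f (consL n (x, τ))) (tfun x) := by
      filter_upwards [hIopen.mem_nhds (htI x hx)] with τ hτ
      exact hmin x hx τ hτ
    exact h3.hasDerivAt_eq_zero h1
  have huniq : ∀ x ∈ D, ∀ t ∈ I, fderiv ℝ f (consL n (x, t)) (consL n (0, 1)) = 0 →
      t = tfun x := by
    intro x hx t ht h0
    have hmono : StrictMonoOn
        (fun τ : ℝ => fderiv ℝ f (consL n (x, τ)) (consL n (0, 1))) I := by
      apply strictMonoOn_of_deriv_pos hIconv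
      · intro τ hτ
        exact (hGt x hx τ hτ).continuousAt.continuousWithinAt
      · intro τ hτ
        have hτ' := interior_subset hτ
        rw [(hGt x hx τ hτ').deriv]
        exact ha x hx τ hτ'
    exact hmono.injOn ht (htI x hx) (h0.trans (hzero x hx).symm)
  have htd : ∀ x ∈ D, DifferentiableAt ℝ tfun x := by
    intro x hx
    have hs := hG x hx _ (htI x hx)
    set a := fderiv ℝ (fderiv ℝ f) (consL n (x, tfun x)) (consL n (0, 1)) (consL n (0, 1))
      with hadef
    have ha0 : a ≠ 0 := (ha x hx _ (htI x hx)).ne'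
    have hinv : ((((fderiv ℝ (fderiv ℝ f) (consL n (x, tfun x))).flip (consL n (0, 1))) ∘L
        consL n) ∘L .inr ℝ (Fin n → ℝ) ℝ).IsInvertible := by
      refine ⟨ContinuousLinearEquiv.unitsEquivAut ℝ (Units.mk0 a ha0), ?_⟩
      ext
      simp [hadef]
    have e1 := hs.eventually_apply_implicitFunctionOfProdDomain hinv
    have e2 := hs.tendsto_implicitFunctionOfProdDomain hinv
    have e3 := hs.hasStrictFDerivAt_implicitFunctionOfProdDomain hinv
    have heq : tfun =ᶠ[nhds x] hs.implicitFunctionOfProdDomain hinv := by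
      filter_upwards [e1, e2.eventually (hIopen.mem_nhds (htI x hx)), hDopen.mem_nhds hx]
        with y hy1 hy2 hy3
      exact (huniq y hy3 _ hy2 (hy1.trans (hzero x hx))).symm
    exact (e3.hasFDerivAt.differentiableAt).congr_of_eventuallyEq heq
  have hcd : ∀ x ∈ D, HasFDerivAt (fun y => consL n (y, tfun y))
      (consL n ∘L ((ContinuousLinearMap.id ℝ (Fin n → ℝ)).prod (fderiv ℝ tfun x))) x := by
    intro x hx
    exact (consL n).hasFDerivAt.comp x ((hasFDerivAt_id x).prodMk (htd x hx).hasFDerivAt)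
  have hsplit : ∀ (v : Fin n → ℝ) (t : ℝ), consL n (v, t) = consL n (v, 0) + t • consL n (0, 1) := by
    intro v t
    rw [← map_smul, ← map_add]
    simp
  have hgd : ∀ x ∈ D, fderiv ℝ g x = (fderiv ℝ f (consL n (x, tfun x))) ∘L
      (consL n ∘L .inl ℝ (Fin n → ℝ) ℝ) := by
    intro x hx
    have h1 : HasFDerivAt g ((fderiv ℝ f (consL n (x, tfun x))) ∘L
      (consL n ∘L ((ContinuousLinearMap.id ℝ (Fin n → ℝ)).prod (fderiv ℝ tfun x)))) x := by
      have : g = fun y => f (consL n (y, tfun y)) := by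
        funext y; rw [hg, consL_apply]
      rw [this]
      exact (hfd x hx _ (htI x hx)).hasFDerivAt.comp x (hcd x hx)
    rw [h1.fderiv]
    apply ContinuousLinearMap.ext
    intro v
    simp only [ContinuousLinearMap.comp_apply, ContinuousLinearMap.prod_apply,
      ContinuousLinearMap.inl_apply]
    rw [hsplit _ (fderiv ℝ tfun x v), map_add, map_smul, hzero x hx]
    simp
  intro x hx
  have hgdd : ∀ u v, fderiv ℝ (fderiv ℝ g) x u v =
      fderiv ℝ (fderiv ℝ f) (consL n (x, tfun x)) (consL n (u, fderiv ℝ tfun x u))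
        (consL n (v, 0)) := by
    intro u v
    have h1 : fderiv ℝ g =ᶠ[nhds x] fun y => (fderiv ℝ f (consL n (y, tfun y))) ∘L
        (consL n ∘L .inl ℝ (Fin n → ℝ) ℝ) := by
      filter_upwards [hDopen.mem_nhds hx] with y hy using hgd y hy
    have h2 : HasFDerivAt (fun y => fderiv ℝ f (consL n (y, tfun y))) _ x :=
      ((hf1 x hx _ (htI x hx)).differentiableAt (by norm_num)).hasFDerivAt.comp x (hcd x hx)
    have h3 := h2.clm_comp (hasFDerivAt_const (consL n ∘L .inl ℝ (Fin n → ℝ) ℝ) x)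
    rw [h1.fderiv_eq, h3.fderiv]
    simp
  have hT : ∀ u, fderiv ℝ (fderiv ℝ f) (consL n (x, tfun x)) (consL n (u, fderiv ℝ tfun x u))
        (consL n (0, 1)) = 0 := by
    intro u
    have h2 : HasFDerivAt (fun y => fderiv ℝ f (consL n (y, tfun y))) _ x :=
      ((hf1 x hx _ (htI x hx)).differentiableAt (by norm_num)).hasFDerivAt.comp x (hcd x hx)
    have h3 := h2.clm_apply (hasFDerivAt_const (consL n (0, 1)) x)
    have h4 : (fun y => fderiv ℝ f (consL n (y, tfun y)) (consL n (0, 1))) =ᶠ[nhds x]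
        fun _ => (0 : ℝ) := by
      filter_upwards [hDopen.mem_nhds hx] with y hy using hzero y hy
    have h5 := h3.unique ((hasFDerivAt_const (0 : ℝ) x).congr_of_eventuallyEq h4)
    have h6 := congrArg (fun L => L u) h5
    simpa using h6
  have hsymm : IsSymmSndFDerivAt ℝ f (consL n (x, tfun x)) :=
    (hfat x hx _ (htI x hx)).isSymmSndFDerivAt (by simp)
  have hapos := ha x hx _ (htI x hx)
  rw [← consL_apply]
  apply angle_schur
  · ext i j
    rw [Matrix.transpose_apply, hessianMatrix_apply, hessianMatrix_apply]
    exact hsymm _ _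
  · rw [hessianMatrix_apply, ← consL_zero_one]
    exact hapos
  · intro i j
    simp only [hessianMatrix_apply]
    rw [hgdd, ← consL_zero_one, ← consL_single, ← consL_single]
    have h1 := hT (Pi.single i 1)
    rw [hsplit _ (fderiv ℝ tfun x (Pi.single i 1))] at h1 ⊢
    simp only [map_add, map_smul, ContinuousLinearMap.add_apply, ContinuousLinearMap.smul_apply,
      smul_eq_mul] at h1 ⊢
    field_simp
    linear_combination (fderiv ℝ (fderiv ℝ f) (consL n (x, tfun x)) (consL n (0, 1))
      (consL n (Pi.single j 1, 0))) * h1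
end
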